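/- For each odd prime p, set a_p = p − #{(x,y) ∈ F_p × F_p : y² = x³ + x}, and let π(N) denote the number of primes at most N. Then lim_{N → ∞} (1/π(N)) · Σ_{odd primes p ≤ N} a_p² / p = 1. -/

import Mathlib

open Filter

/-!
If `p % 4 = 3` then `a_p = 0`. If `p % 4 = 1`, the second moment of the Frobenius traces of the
curves `y² = x³ + kx` over `k` exhibits `a_p / 2` as the real part of a Gaussian integer `π`
congruent to `1` modulo `2` with `p = ππ̄`, so `a_p² / p = 2 + χ(π) + χ(π̄)` for the character
`χ(α) = ±(α/|α|)²` of `ℤ[i]`, the sign making it trivial on units. The `2` contributes `1` to the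
mean by the prime number theorem modulo `4`. The other two terms contribute `0` by the
Wiener–Ikehara theorem (obtained here from the Fejér kernel and a Tauberian theorem for the Laplace
transform), because the Hecke `L`-function of `χ` is holomorphic and nonzero on `1 ≤ re s`: pairing
neighbours in its lattice sum continues it past this half-plane, its value at `1` is a sum of
values of `(π / sin (πz))²` with positive real part, and at the other points of the line
`re s = 1` the inequality `3 + 4 cos θ + cos 2θ ≥ 0` applies.
-/

namespace CMTrace

section FejerKernel

open MeasureTheory Set

/-- The Fejér kernel `(sin (v/2) / (v/2))²`, the Fourier transform of `tent`. -/
noncomputable def fejerKernel (v : ℝ) : ℝ := Real.sinc (v / 2) ^ 2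

/-- The tent function of height one supported on `[-1, 1]`. -/
noncomputable def tent (t : ℝ) : ℝ := max (1 - |t|) 0

lemma fejerKernel_nonneg (v : ℝ) : 0 ≤ fejerKernel v := sq_nonneg _

lemma continuous_fejerKernel : Continuous fejerKernel :=
  (Real.continuous_sinc.comp (continuous_id.div_const 2)).pow 2

lemma fejerKernel_zero : fejerKernel 0 = 1 := by simp [fejerKernel]

lemma fejerKernel_of_ne_zero {v : ℝ} (hv : v ≠ 0) :
    fejerKernel v = 2 * (1 - Real.cos v) / v ^ 2 := by
  have hcos : Real.cos v = 1 - 2 * Real.sin (v / 2) ^ 2 := by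
    conv_lhs => rw [← mul_div_cancel₀ v two_ne_zero, Real.cos_two_mul, Real.cos_sq']
    ring
  rw [fejerKernel, Real.sinc_of_ne_zero (by positivity), hcos]
  field_simp
  ring

lemma fejerKernel_le_mul_inv_one_add_sq (v : ℝ) : fejerKernel v ≤ 5 * (1 + v ^ 2)⁻¹ := by
  have hone : fejerKernel v ≤ 1 := (sq_le_one_iff_abs_le_one _).2 (Real.abs_sinc_le_one _)
  have hsq : fejerKernel v * v ^ 2 ≤ 4 := by
    rcases eq_or_ne v 0 with rfl | hv
    · norm_num
    · rw [fejerKernel_of_ne_zero hv, div_mul_cancel₀ _ (by positivity)]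
      linarith [Real.neg_one_le_cos v]
  rw [← div_eq_mul_inv, le_div_iff₀ (by positivity)]
  linarith

lemma integrable_fejerKernel : Integrable fejerKernel :=
  (integrable_inv_one_add_sq.const_mul 5).mono' continuous_fejerKernel.aestronglyMeasurable <|
    Eventually.of_forall fun v => by
      rw [Real.norm_of_nonneg (fejerKernel_nonneg v)]
      exact fejerKernel_le_mul_inv_one_add_sq v

lemma integral_fejerKernel_pos : 0 < ∫ v, fejerKernel v :=
  integral_pos_of_integrable_nonneg_nonzero (x := 0) continuous_fejerKernel
    integrable_fejerKernel fejerKernel_nonneg (by simp [fejerKernel_zero])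

lemma tent_nonneg (t : ℝ) : 0 ≤ tent t := le_max_right _ _

lemma tent_neg (t : ℝ) : tent (-t) = tent t := by simp [tent]

lemma tent_eq_zero {t : ℝ} (ht : 1 ≤ |t|) : tent t = 0 := max_eq_right (by linarith)

lemma continuous_tent : Continuous tent := by unfold tent; fun_prop

lemma integrable_tent : Integrable tent :=
  continuous_tent.integrable_of_hasCompactSupport <|
    HasCompactSupport.intro (isCompact_Icc (a := (-1 : ℝ)) (b := 1)) fun _ ht =>
      tent_eq_zero (not_lt.1 fun h => ht ⟨(abs_lt.1 h).1.le, (abs_lt.1 h).2.le⟩)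

lemma integral_one_sub_mul_cos (v : ℝ) :
    ∫ x in (0 : ℝ)..1, (1 - x) * Real.cos (x * v) = fejerKernel v / 2 := by
  rcases eq_or_ne v 0 with rfl | hv
  · simp only [mul_zero, Real.cos_zero, mul_one, fejerKernel_zero]
    rw [intervalIntegral.integral_sub (by simp) (by simp)]
    simp only [intervalIntegral.integral_const, integral_id]
    norm_num
  have hderiv (x : ℝ) : HasDerivAt
      (fun x => (1 - x) * Real.sin (x * v) / v - Real.cos (x * v) / v ^ 2)
      ((1 - x) * Real.cos (x * v)) x := by
    have hsin : HasDerivAt (fun x => Real.sin (x * v)) (Real.cos (x * v) * v) x := by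
      simpa using ((hasDerivAt_id x).mul_const v).sin
    have hcos : HasDerivAt (fun x => Real.cos (x * v)) (-Real.sin (x * v) * v) x := by
      simpa using ((hasDerivAt_id x).mul_const v).cos
    have hsub : HasDerivAt (fun x : ℝ => 1 - x) (-1) x := (hasDerivAt_id x).const_sub 1
    refine (((hsub.mul hsin).div_const v).sub (hcos.div_const (v ^ 2))).congr_deriv ?_
    field_simp
    ring
  rw [intervalIntegral.integral_eq_sub_of_hasDerivAt (fun x _ => hderiv x)
    (Continuous.intervalIntegrable (by fun_prop) _ _), fejerKernel_of_ne_zero hv]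
  simp only [sub_self, zero_mul, zero_div, one_mul, Real.cos_zero, Real.sin_zero, mul_zero]
  field_simp
  ring

lemma integral_tent_mul_cos (v : ℝ) : ∫ t, tent t * Real.cos (t * v) = fejerKernel v := by
  have heven (t : ℝ) :
      tent t * Real.cos (t * v) = (fun x => max (1 - x) 0 * Real.cos (x * v)) |t| := by
    rcases abs_cases t with ⟨h, _⟩ | ⟨h, _⟩ <;> simp [tent, h]
  simp_rw [heven]
  rw [integral_comp_abs (f := fun x => max (1 - x) 0 * Real.cos (x * v)),
    setIntegral_eq_of_subset_of_forall_sdiff_eq_zero (s := Ioc (0 : ℝ) 1) measurableSet_Ioi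
      (fun x hx => hx.1) (fun x hx => ?_),
    setIntegral_congr_fun (g := fun x => (1 - x) * Real.cos (x * v)) measurableSet_Ioc
      (fun x hx => ?_),
    ← intervalIntegral.integral_of_le zero_le_one, integral_one_sub_mul_cos]
  · ring
  · simp only [max_eq_left (sub_nonneg.2 hx.2)]
  · have hx1 : 1 ≤ x := not_lt.1 fun h => hx.2 ⟨hx.1, h.le⟩
    rw [max_eq_right (by linarith), zero_mul]

lemma integral_tent_mul_exp (v : ℝ) :
    ∫ t, (tent t : ℂ) * Complex.exp ((t * v : ℝ) * Complex.I) = fejerKernel v := by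
  set f : ℝ → ℂ := fun t => (tent t : ℂ) * Complex.exp ((t * v : ℝ) * Complex.I) with hf
  have hinteg : Integrable f := by
    refine integrable_tent.mono' ?_ (Eventually.of_forall fun t => ?_)
    · have := continuous_tent
      exact (by fun_prop : Continuous f).aestronglyMeasurable
    · rw [norm_mul, Complex.norm_exp_ofReal_mul_I, mul_one, Complex.norm_real,
        Real.norm_of_nonneg (tent_nonneg t)]
  have hsymm (t : ℝ) : f t + f (-t) = ((2 * (tent t * Real.cos (t * v)) : ℝ) : ℂ) := by
    simp only [hf, tent_neg]
    push_cast
    rw [Complex.cos]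
    ring_nf
  have htwo := integral_add hinteg hinteg.comp_neg
  rw [integral_neg_eq_self f volume] at htwo
  simp_rw [hsymm] at htwo
  rw [integral_complex_ofReal, integral_const_mul, integral_tent_mul_cos] at htwo
  push_cast at htwo
  linear_combination -htwo / 2

end FejerKernel

section KernelAverages

open MeasureTheory Set Topology

variable {F K : ℝ → ℝ} {B ε η : ℝ}

lemma integrable_kernel (hK : Integrable K) {l : ℝ} (hl : l ≠ 0) (y : ℝ) :
    Integrable fun u => K (l * (u - y)) :=
  (hK.comp_mul_left' hl).comp_sub_right y

lemma integral_kernel (K : ℝ → ℝ) {l : ℝ} (hl : 0 < l) (y : ℝ) :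
    ∫ u, K (l * (u - y)) = l⁻¹ * ∫ v, K v := by
  rw [integral_sub_right_eq_self (fun u => K (l * u)), Measure.integral_comp_mul_left,
    abs_of_pos (inv_pos.2 hl), smul_eq_mul]

lemma setIntegral_kernel_Icc (K : ℝ → ℝ) {l : ℝ} (hl : 0 < l) (y : ℝ) (hη : 0 < η) :
    ∫ u in Icc (y - η) (y + η), K (l * (u - y)) = l⁻¹ * ∫ v in -(l * η)..l * η, K v := by
  rw [integral_Icc_eq_integral_Ioc, ← intervalIntegral.integral_of_le (by linarith),
    intervalIntegral.integral_comp_sub_right (fun u => K (l * u)),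
    intervalIntegral.integral_comp_mul_left _ hl.ne', smul_eq_mul]
  ring_nf

lemma integrableOn_mul_kernel (hF : Measurable F) (hB : ∀ u, 0 < u → |F u| ≤ B)
    (hK : Integrable K) {l : ℝ} (hl : l ≠ 0) (y : ℝ) :
    IntegrableOn (fun u => F u * K (l * (u - y))) (Ioi 0) :=
  (integrable_kernel hK hl y).integrableOn.bdd_mul hF.aestronglyMeasurable <| by
    filter_upwards [ae_restrict_mem measurableSet_Ioi] with u hu using hB u hu

lemma kernel_lower_bound (hF : Measurable F) (hB : ∀ u, 0 < u → |F u| ≤ B)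
    (hK : Integrable K) (hK0 : ∀ v, 0 ≤ K v) (hη : 0 < η) {l : ℝ} (hl : 0 < l) {y : ℝ}
    (hy : η < y) (hε : ∀ u ∈ Icc (y - η) (y + η), ε ≤ F u) :
    (ε + B) * (∫ v in -(l * η)..l * η, K v) - B * ∫ v, K v
      ≤ l * ∫ u in Ioi 0, F u * K (l * (u - y)) := by
  set k : ℝ → ℝ := fun u => K (l * (u - y))
  set I := Icc (y - η) (y + η)
  have hk : Integrable k := integrable_kernel hK hl.ne' y
  have hk0 (u : ℝ) : 0 ≤ k u := hK0 _
  have hB0 : 0 ≤ B := (abs_nonneg _).trans (hB 1 one_pos)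
  have hIpos : Ioi 0 ∩ I = I := inter_eq_right.2 fun u hu => (sub_pos.2 hy).trans_le hu.1
  have hinteg : IntegrableOn (fun u => (ε + B) * I.indicator k u) (Ioi 0) :=
    ((hk.indicator measurableSet_Icc).const_mul _).integrableOn
  have hpointwise : ∀ u ∈ Ioi (0 : ℝ), (ε + B) * I.indicator k u - B * k u ≤ F u * k u := by
    intro u hu
    by_cases huI : u ∈ I
    · rw [indicator_of_mem huI]
      nlinarith [hε u huI, hk0 u]
    · rw [indicator_of_notMem huI]
      nlinarith [neg_le_of_abs_le (hB u hu), hk0 u]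
  have hmono := setIntegral_mono_on (hinteg.sub (hk.const_mul B).integrableOn)
    (integrableOn_mul_kernel hF hB hK hl.ne' y) measurableSet_Ioi hpointwise
  simp only [Pi.sub_apply] at hmono
  rw [integral_sub hinteg (hk.const_mul B).integrableOn, integral_const_mul, integral_const_mul,
    setIntegral_indicator measurableSet_Icc, hIpos, setIntegral_kernel_Icc K hl y hη] at hmono
  have hhalf : B * ∫ u in Ioi 0, k u ≤ B * (l⁻¹ * ∫ v, K v) := by
    rw [← integral_kernel K hl y]
    exact mul_le_mul_of_nonneg_left
      (setIntegral_le_integral hk (Eventually.of_forall hk0)) hB0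
  calc (ε + B) * (∫ v in -(l * η)..l * η, K v) - B * ∫ v, K v
      = l * ((ε + B) * (l⁻¹ * ∫ v in -(l * η)..l * η, K v) - B * (l⁻¹ * ∫ v, K v)) := by
        field_simp
    _ ≤ l * ∫ u in Ioi 0, F u * k u := by gcongr; linarith

/-- As the scale `l` grows, the lower bound from `kernel_lower_bound` tends to `ε ∫ K > 0`. -/
lemma eventually_exists_lt_of_tendsto_kernel (hF : Measurable F) (hB : ∀ u, 0 < u → |F u| ≤ B)
    (hK : Integrable K) (hK0 : ∀ v, 0 ≤ K v) (hKpos : 0 < ∫ v, K v)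
    (hlim : ∀ l, 0 < l →
      Tendsto (fun y => ∫ u in Ioi 0, F u * K (l * (u - y))) atTop (𝓝 0))
    (hε : 0 < ε) (hη : 0 < η) : ∀ᶠ y in atTop, ∃ u ∈ Icc (y - η) (y + η), F u < ε := by
  have hscale : Tendsto (fun l => (ε + B) * (∫ v in -(l * η)..l * η, K v) - B * ∫ v, K v)
      atTop (𝓝 (ε * ∫ v, K v)) := by
    have htop : Tendsto (fun l : ℝ => l * η) atTop atTop := tendsto_id.atTop_mul_const hη
    have hbot : Tendsto (fun l : ℝ => -(l * η)) atTop atBot := tendsto_neg_atTop_atBot.comp htop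
    have hwindow := intervalIntegral_tendsto_integral hK hbot htop
    simpa only [← sub_mul, add_sub_cancel_right]
      using (hwindow.const_mul (ε + B)).sub_const (B * ∫ v, K v)
  obtain ⟨l, hl, hl0⟩ := ((hscale.eventually_const_lt (mul_pos hε hKpos)).and
    (eventually_gt_atTop 0)).exists
  rw [← mul_zero l] at hl
  have hsmall := ((hlim l hl0).const_mul l).eventually_lt_const hl
  filter_upwards [hsmall, eventually_gt_atTop η] with y hy hyη
  by_contra! hlarge
  exact hy.not_ge (kernel_lower_bound hF hB hK hK0 hη hl0 hyη hlarge)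

/-- A one-sided form of uniform continuity on the positive half-line: `F` cannot drop by a fixed
amount over short intervals. -/
def SlowlyDecreasing (F : ℝ → ℝ) : Prop :=
  ∀ ε, 0 < ε → ∃ η, 0 < η ∧ ∀ u, 0 < u → ∀ v ∈ Icc u (u + η), F u - ε ≤ F v

theorem SlowlyDecreasing.tendsto_zero_of_tendsto_kernel (hslow : SlowlyDecreasing F)
    (hF : Measurable F) (hB : ∀ u, 0 < u → |F u| ≤ B)
    (hK : Integrable K) (hK0 : ∀ v, 0 ≤ K v) (hKpos : 0 < ∫ v, K v)
    (hlim : ∀ l, 0 < l →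
      Tendsto (fun y => ∫ u in Ioi 0, F u * K (l * (u - y))) atTop (𝓝 0)) :
    Tendsto F atTop (𝓝 0) := by
  have hlim_neg : ∀ l, 0 < l →
      Tendsto (fun y => ∫ u in Ioi 0, -F u * K (l * (u - y))) atTop (𝓝 0) := by
    intro l hl
    simpa only [neg_mul, integral_neg, neg_zero] using (hlim l hl).neg
  rw [Metric.tendsto_nhds]
  intro ε hε
  obtain ⟨η, hη, hdrop⟩ := hslow (ε / 2) (half_pos hε)
  have hupper := (tendsto_atTop_add_const_right atTop (η / 2) tendsto_id).eventually
    (eventually_exists_lt_of_tendsto_kernel hF hB hK hK0 hKpos hlim (half_pos hε) (half_pos hη))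
  have hlower := (tendsto_atTop_add_const_right atTop (-(η / 2)) tendsto_id).eventually
    (eventually_exists_lt_of_tendsto_kernel hF.neg (by simpa only [Pi.neg_apply, abs_neg] using hB)
      hK hK0 hKpos hlim_neg (half_pos hε) (half_pos hη))
  filter_upwards [hupper, hlower, eventually_gt_atTop η]
    with y ⟨u, hu, hFu⟩ ⟨v, hv, hFv⟩ hy
  simp only [id_eq, mem_Icc, Pi.neg_apply] at hu hv hFv
  have hyu := hdrop y (hη.trans hy) u ⟨by linarith, by linarith⟩
  have hvy := hdrop v (by linarith) y ⟨by linarith, by linarith⟩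
  rw [Real.dist_eq, sub_zero, abs_lt]
  constructor <;> linarith

end KernelAverages

section LaplaceTauberian

open MeasureTheory Set Topology

variable {F : ℝ → ℝ} {B : ℝ} {G : ℂ → ℂ}

lemma integrable_damped_tent_kernel (hF : Measurable F) (hB : ∀ u, 0 < u → |F u| ≤ B)
    (l y : ℝ) {d : ℝ} (hd : 0 < d) :
    Integrable (Function.uncurry fun u t : ℝ => ((F u * Real.exp (-d * u) : ℝ) : ℂ) *
        ((tent t : ℂ) * Complex.exp ((t * (l * (u - y)) : ℝ) * Complex.I)))
      ((volume.restrict (Ioi 0)).prod volume) := by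
  have hmajorant : Integrable (fun u => B * Real.exp (-d * u)) (volume.restrict (Ioi (0 : ℝ))) :=
    (exp_neg_integrableOn_Ioi 0 hd).const_mul B
  refine (hmajorant.mul_prod integrable_tent).mono' (Measurable.aestronglyMeasurable ?_) ?_
  · have := continuous_tent.measurable
    simp only [Function.uncurry_def]
    fun_prop
  · have hpos : ∀ᵐ z : ℝ × ℝ ∂((volume.restrict (Ioi (0 : ℝ))).prod volume), 0 < z.1 :=
      Measure.quasiMeasurePreserving_fst.ae (ae_restrict_mem measurableSet_Ioi)
    filter_upwards [hpos] with z hz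
    simp only [Function.uncurry_def]
    rw [norm_mul, norm_mul, Complex.norm_exp_ofReal_mul_I, mul_one, Complex.norm_real,
      Complex.norm_real, norm_mul, Real.norm_of_nonneg (tent_nonneg _),
      Real.norm_of_nonneg (Real.exp_pos _).le, Real.norm_eq_abs]
    gcongr
    · exact tent_nonneg _
    · exact hB _ hz

lemma integral_damped_mul_fejerKernel (hF : Measurable F) (hB : ∀ u, 0 < u → |F u| ≤ B)
    (hLaplace : ∀ z : ℂ, 0 < z.re → ∫ u in Ioi (0 : ℝ), (F u : ℂ) * Complex.exp (-z * u) = G z)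
    (l y : ℝ) {d : ℝ} (hd : 0 < d) :
    ∫ u in Ioi (0 : ℝ), ((F u * Real.exp (-d * u) * fejerKernel (l * (u - y)) : ℝ) : ℂ) =
      ∫ t, (tent t : ℂ) * Complex.exp ((-(t * (l * y)) : ℝ) * Complex.I) *
        G (d - (t * l : ℝ) * Complex.I) := by
  have hkernel (u : ℝ) : ((F u * Real.exp (-d * u) * fejerKernel (l * (u - y)) : ℝ) : ℂ)
      = ∫ t, ((F u * Real.exp (-d * u) : ℝ) : ℂ) *
        ((tent t : ℂ) * Complex.exp ((t * (l * (u - y)) : ℝ) * Complex.I)) := by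
    rw [integral_const_mul, integral_tent_mul_exp, Complex.ofReal_mul]
  simp_rw [hkernel]
  rw [integral_integral_swap (integrable_damped_tent_kernel hF hB l y hd)]
  congr 1 with t
  rw [← hLaplace _ (by simpa using hd), ← integral_const_mul]
  congr 1 with u
  have hexp : Complex.exp (-(d * u)) * Complex.exp ((t * (l * (u - y)) : ℝ) * Complex.I) =
      Complex.exp ((-(t * (l * y)) : ℝ) * Complex.I) *
        Complex.exp (-(d - (t * l : ℝ) * Complex.I) * u) := by
    rw [← Complex.exp_add, ← Complex.exp_add]
    push_cast
    ring_nf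
  push_cast at hexp ⊢
  rw [neg_mul]
  linear_combination (F u * tent t : ℂ) * hexp

lemma tendsto_integral_damped (hF : Measurable F) (hB : ∀ u, 0 < u → |F u| ≤ B)
    {K : ℝ → ℝ} (hK : Integrable K) :
    Tendsto (fun d : ℝ => ∫ u in Ioi (0 : ℝ), ((F u * Real.exp (-d * u) * K u : ℝ) : ℂ))
      (𝓝[>] 0) (𝓝 (∫ u in Ioi (0 : ℝ), ((F u * K u : ℝ) : ℂ))) := by
  refine tendsto_integral_filter_of_dominated_convergence (fun u => B * |K u|) ?_ ?_
    (hK.abs.const_mul B).integrableOn ?_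
  · refine Eventually.of_forall fun d => ?_
    have hmeas : Measurable fun u => F u * Real.exp (-d * u) := by fun_prop
    exact Complex.continuous_ofReal.comp_aestronglyMeasurable
      (hmeas.aestronglyMeasurable.mul hK.aestronglyMeasurable.restrict)
  · filter_upwards [self_mem_nhdsWithin] with d hd
    filter_upwards [ae_restrict_mem measurableSet_Ioi] with u hu
    have hexp : Real.exp (-d * u) ≤ 1 := by
      rw [Real.exp_le_one_iff, neg_mul]
      exact neg_nonpos.2 (mul_pos hd hu).le
    rw [Complex.norm_real, norm_mul, norm_mul, Real.norm_of_nonneg (Real.exp_pos _).le,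
      Real.norm_eq_abs, Real.norm_eq_abs]
    gcongr
    exact (mul_le_of_le_one_right (abs_nonneg _) hexp).trans (hB u hu)
  · filter_upwards with u
    have hcont : Continuous fun d : ℝ => ((F u * Real.exp (-d * u) * K u : ℝ) : ℂ) := by fun_prop
    simpa only [neg_zero, zero_mul, Real.exp_zero, mul_one]
      using (hcont.tendsto 0).mono_left nhdsWithin_le_nhds

lemma tendsto_integral_tent_boundary (hG : ContinuousOn G {z | 0 ≤ z.re}) (l y : ℝ) :
    Tendsto (fun d : ℝ => ∫ t, (tent t : ℂ) * Complex.exp ((-(t * (l * y)) : ℝ) * Complex.I) *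
        G (d - (t * l : ℝ) * Complex.I)) (𝓝[>] 0)
      (𝓝 (∫ t, (tent t : ℂ) * Complex.exp ((-(t * (l * y)) : ℝ) * Complex.I) *
        G (-(t * l : ℝ) * Complex.I))) := by
  have hcompact : IsCompact (Icc (0 : ℝ) 1 ×ℂ Icc (-|l|) |l|) :=
    isCompact_Icc.reProdIm isCompact_Icc
  obtain ⟨A, hA⟩ := hcompact.exists_bound_of_continuousOn
    (hG.mono fun z hz => (Complex.mem_reProdIm.1 hz).1.1)
  refine tendsto_integral_filter_of_dominated_convergence (fun t => tent t * A) ?_ ?_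
    (integrable_tent.mul_const A) ?_
  · filter_upwards [self_mem_nhdsWithin] with d hd
    have hGd : Continuous fun t : ℝ => G (d - (t * l : ℝ) * Complex.I) :=
      hG.comp_continuous (by fun_prop) fun t => by simpa using hd.le
    have := continuous_tent
    have hphase : Continuous fun t : ℝ =>
      (tent t : ℂ) * Complex.exp ((-(t * (l * y)) : ℝ) * Complex.I) := by fun_prop
    exact (hphase.mul hGd).aestronglyMeasurable
  · filter_upwards [self_mem_nhdsWithin, nhdsWithin_le_nhds (gt_mem_nhds one_pos)] with d hd hd1
    refine Eventually.of_forall fun t => ?_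
    rw [norm_mul, norm_mul, Complex.norm_exp_ofReal_mul_I, mul_one, Complex.norm_real,
      Real.norm_of_nonneg (tent_nonneg t)]
    rcases le_or_gt 1 |t| with ht | ht
    · simp [tent_eq_zero ht]
    · have htl : |t * l| ≤ |l| := by
        rw [abs_mul]
        exact mul_le_of_le_one_left (abs_nonneg _) ht.le
      refine mul_le_mul_of_nonneg_left (hA _ (Complex.mem_reProdIm.2 ⟨?_, ?_⟩)) (tent_nonneg t)
      · simpa using ⟨hd.le, hd1.le⟩
      · simpa [neg_le, and_comm] using abs_le.1 htl
  · filter_upwards with t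
    refine Tendsto.const_mul _ ((hG _ (by simp)).tendsto.comp (tendsto_nhdsWithin_iff.2 ⟨?_, ?_⟩))
    · have hcont : Continuous fun d : ℝ => (d : ℂ) - (t * l : ℝ) * Complex.I := by fun_prop
      simpa only [Complex.ofReal_zero, zero_sub, neg_mul]
        using (hcont.tendsto 0).mono_left nhdsWithin_le_nhds
    · filter_upwards [self_mem_nhdsWithin] with d hd
      simpa using hd.le

lemma integral_mul_fejerKernel_eq_fourier (hF : Measurable F) (hB : ∀ u, 0 < u → |F u| ≤ B)
    (hG : ContinuousOn G {z | 0 ≤ z.re})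
    (hLaplace : ∀ z : ℂ, 0 < z.re → ∫ u in Ioi (0 : ℝ), (F u : ℂ) * Complex.exp (-z * u) = G z)
    {l : ℝ} (hl : l ≠ 0) (y : ℝ) :
    ∫ u in Ioi (0 : ℝ), ((F u * fejerKernel (l * (u - y)) : ℝ) : ℂ) =
      ∫ t, (tent t : ℂ) * Complex.exp ((-(t * (l * y)) : ℝ) * Complex.I) *
        G (-(t * l : ℝ) * Complex.I) := by
  refine tendsto_nhds_unique ((tendsto_integral_damped hF hB
    (integrable_kernel integrable_fejerKernel hl y)).congr' ?_)
    (tendsto_integral_tent_boundary hG l y)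
  filter_upwards [self_mem_nhdsWithin] with d hd
  exact integral_damped_mul_fejerKernel hF hB hLaplace l y hd

lemma tendsto_integral_mul_fejerKernel (hF : Measurable F) (hB : ∀ u, 0 < u → |F u| ≤ B)
    (hG : ContinuousOn G {z | 0 ≤ z.re})
    (hLaplace : ∀ z : ℂ, 0 < z.re → ∫ u in Ioi (0 : ℝ), (F u : ℂ) * Complex.exp (-z * u) = G z)
    {l : ℝ} (hl : 0 < l) :
    Tendsto (fun y => ∫ u in Ioi 0, F u * fejerKernel (l * (u - y))) atTop (𝓝 0) := by
  have hfreq : Tendsto (fun y : ℝ => (l / (2 * Real.pi)) * y) atTop (cocompact ℝ) :=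
    (tendsto_id.const_mul_atTop (by positivity)).mono_right atTop_le_cocompact
  have hcomplex : Tendsto (fun y => ((∫ u in Ioi 0, F u * fejerKernel (l * (u - y)) : ℝ) : ℂ))
      atTop (𝓝 0) := by
    refine ((Real.tendsto_integral_exp_smul_cocompact fun t : ℝ =>
      (tent t : ℂ) * G (-(t * l : ℝ) * Complex.I)).comp hfreq).congr fun y => ?_
    rw [← integral_complex_ofReal, integral_mul_fejerKernel_eq_fourier hF hB hG hLaplace hl.ne' y]
    simp only [Function.comp_apply]
    congr 1 with t
    have hphase : 2 * Real.pi * -(t * (l / (2 * Real.pi) * y)) = -(t * (l * y)) := by field_simp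
    rw [Circle.smul_def, Real.fourierChar_apply, smul_eq_mul, hphase]
    ring
  simpa only [Function.comp_def, Complex.ofReal_re, Complex.zero_re]
    using (Complex.continuous_re.tendsto 0).comp hcomplex

theorem SlowlyDecreasing.tendsto_zero_of_laplace (hslow : SlowlyDecreasing F) (hF : Measurable F)
    (hB : ∀ u, 0 < u → |F u| ≤ B) (hG : ContinuousOn G {z | 0 ≤ z.re})
    (hLaplace : ∀ z : ℂ, 0 < z.re → ∫ u in Ioi (0 : ℝ), (F u : ℂ) * Complex.exp (-z * u) = G z) :
    Tendsto F atTop (𝓝 0) :=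
  hslow.tendsto_zero_of_tendsto_kernel hF hB integrable_fejerKernel fejerKernel_nonneg
    integral_fejerKernel_pos fun _ hl => tendsto_integral_mul_fejerKernel hF hB hG hLaplace hl

end LaplaceTauberian

section WienerIkehara

open MeasureTheory Set Topology

/-- The summatory function `x ↦ ∑_{1 ≤ k ≤ x} f k` of an arithmetic function. -/
noncomputable def summatory (f : ℕ → ℝ) (x : ℝ) : ℝ := ∑ k ∈ Finset.Icc 1 ⌊x⌋₊, f k

variable {f : ℕ → ℝ} {C : ℝ}

lemma summatory_nonneg (hf : ∀ n, 0 ≤ f n) (x : ℝ) : 0 ≤ summatory f x :=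
  Finset.sum_nonneg fun _ _ => hf _

lemma monotone_summatory (hf : ∀ n, 0 ≤ f n) : Monotone (summatory f) := fun _ _ hxy =>
  Finset.sum_le_sum_of_subset_of_nonneg (Finset.Icc_subset_Icc le_rfl (Nat.floor_mono hxy))
    fun _ _ _ => hf _

lemma measurable_summatory_exp (hf : ∀ n, 0 ≤ f n) :
    Measurable fun u => summatory f (Real.exp u) * Real.exp (-u) :=
  ((monotone_summatory hf).comp Real.exp_monotone).measurable.mul (by fun_prop)

lemma summatory_exp_mul_exp_neg_nonneg (hf : ∀ n, 0 ≤ f n) (u : ℝ) :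
    0 ≤ summatory f (Real.exp u) * Real.exp (-u) :=
  mul_nonneg (summatory_nonneg hf _) (Real.exp_pos _).le

lemma summatory_exp_mul_exp_neg_le (hC : ∀ x, 1 ≤ x → summatory f x ≤ C * x) {u : ℝ}
    (hu : 0 < u) : summatory f (Real.exp u) * Real.exp (-u) ≤ C := by
  rw [Real.exp_neg, ← div_eq_mul_inv, div_le_iff₀ (Real.exp_pos u)]
  exact hC _ (Real.one_le_exp hu.le)

lemma slowlyDecreasing_summatory (hf : ∀ n, 0 ≤ f n)
    (hC : ∀ x, 1 ≤ x → summatory f x ≤ C * x) (A : ℝ) :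
    SlowlyDecreasing fun u => summatory f (Real.exp u) * Real.exp (-u) - A := by
  have hC0 : 0 ≤ C := by simpa using (summatory_nonneg hf 1).trans (hC 1 le_rfl)
  refine fun ε hε => ⟨ε / (C + 1), by positivity, fun u hu v hv => ?_⟩
  have hshift : Real.exp (-v) = Real.exp (-u) * Real.exp (-(v - u)) := by
    rw [← Real.exp_add]
    ring_nf
  have hdecay : 1 - (v - u) ≤ Real.exp (-(v - u)) := Real.one_sub_le_exp_neg _
  have hmono := monotone_summatory hf (Real.exp_monotone hv.1)
  have hstep : C * (v - u) ≤ ε :=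
    calc C * (v - u) ≤ (C + 1) * (ε / (C + 1)) :=
          mul_le_mul (by linarith) (by linarith [hv.2]) (by linarith [hv.1]) (by linarith)
      _ = ε := mul_div_cancel₀ _ (by positivity)
  have hratio : summatory f (Real.exp u) * Real.exp (-u) * (1 - (v - u))
      ≤ summatory f (Real.exp v) * Real.exp (-v) :=
    calc _ ≤ summatory f (Real.exp u) * Real.exp (-u) * Real.exp (-(v - u)) :=
          mul_le_mul_of_nonneg_left hdecay (summatory_exp_mul_exp_neg_nonneg hf u)
      _ = summatory f (Real.exp u) * Real.exp (-v) := by rw [hshift, mul_assoc]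
      _ ≤ _ := mul_le_mul_of_nonneg_right hmono (Real.exp_pos _).le
  have hbound := mul_le_mul_of_nonneg_right (summatory_exp_mul_exp_neg_le hC hu)
    (sub_nonneg.2 hv.1)
  linarith

lemma integral_comp_exp_Ioi (g : ℝ → ℂ) :
    ∫ u in Ioi (0 : ℝ), Real.exp u • g (Real.exp u) = ∫ t in Ioi (1 : ℝ), g t := by
  have himage : Real.exp '' Ioi 0 = Ioi 1 := by
    ext x
    refine ⟨fun ⟨u, hu, hux⟩ => hux ▸ Real.one_lt_exp_iff.2 hu, fun hx =>
      ⟨Real.log x, Real.log_pos hx, Real.exp_log (one_pos.trans hx)⟩⟩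
  rw [← himage, integral_image_eq_integral_abs_deriv_smul measurableSet_Ioi
    (fun x _ => (Real.hasDerivAt_exp x).hasDerivWithinAt) Real.exp_injective.injOn]
  simp only [abs_of_pos (Real.exp_pos _)]

lemma integral_summatory_mul_exp (hf : ∀ n, 0 ≤ f n)
    (hC : ∀ x, 1 ≤ x → summatory f x ≤ C * x) {z : ℂ} (hz : 0 < z.re) :
    ∫ u in Ioi (0 : ℝ),
        ((summatory f (Real.exp u) * Real.exp (-u) : ℝ) : ℂ) * Complex.exp (-z * u)
      = LSeries (fun n => (f n : ℂ)) (1 + z) / (1 + z) := by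
  have hs : 1 < (1 + z).re := by simpa using hz
  have hs0 : 1 + z ≠ 0 := Complex.ne_zero_of_one_lt_re hs
  have hO : (fun n : ℕ => ∑ k ∈ Finset.Icc 1 n, f k) =O[atTop] fun n => (n : ℝ) ^ (1 : ℝ) := by
    refine Asymptotics.IsBigO.of_bound C ?_
    filter_upwards [eventually_ge_atTop 1] with n hn
    rw [Real.norm_of_nonneg (Finset.sum_nonneg fun _ _ => hf _), Real.rpow_one, Real.norm_natCast]
    simpa only [summatory, Nat.floor_natCast] using hC n (by exact_mod_cast hn)
  rw [LSeries_eq_mul_integral_of_nonneg f zero_le_one hs hO hf, mul_div_cancel_left₀ _ hs0,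
    ← integral_comp_exp_Ioi]
  refine setIntegral_congr_fun measurableSet_Ioi fun u _ => ?_
  have hpow : ((Real.exp u : ℝ) : ℂ) ^ (-((1 + z) + 1))
      = Complex.exp (-u) * Complex.exp (-u) * Complex.exp (-z * u) := by
    rw [Complex.cpow_def_of_ne_zero (by exact_mod_cast (Real.exp_pos u).ne'),
      ← Complex.ofReal_log (Real.exp_pos u).le, Real.log_exp, ← Complex.exp_add,
      ← Complex.exp_add]
    ring_nf
  have hcancel : Complex.exp u * Complex.exp (-u) = 1 := by rw [← Complex.exp_add]; simp
  simp only [hpow, summatory, Complex.real_smul]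
  push_cast
  linear_combination -(∑ k ∈ Finset.Icc 1 ⌊Real.exp u⌋₊, (f k : ℂ)) * Complex.exp (-u) *
    Complex.exp (-z * u) * hcancel

lemma integrableOn_summatory_mul_exp (hf : ∀ n, 0 ≤ f n)
    (hC : ∀ x, 1 ≤ x → summatory f x ≤ C * x) {z : ℂ} (hz : 0 < z.re) :
    IntegrableOn (fun u : ℝ =>
      ((summatory f (Real.exp u) * Real.exp (-u) : ℝ) : ℂ) * Complex.exp (-z * u)) (Ioi 0) := by
  refine (integrableOn_exp_mul_complex_Ioi (by simpa using hz) 0).bdd_mul (c := C)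
    (Complex.measurable_ofReal.comp (measurable_summatory_exp hf)).aestronglyMeasurable ?_
  filter_upwards [ae_restrict_mem measurableSet_Ioi] with u hu
  rw [Complex.norm_real, Real.norm_of_nonneg (summatory_exp_mul_exp_neg_nonneg hf u)]
  exact summatory_exp_mul_exp_neg_le hC hu

lemma integral_summatory_sub_mul_exp (hf : ∀ n, 0 ≤ f n)
    (hC : ∀ x, 1 ≤ x → summatory f x ≤ C * x) {A : ℝ} {w z : ℂ} (hz : 0 < z.re)
    (hw : LSeries (fun n => (f n : ℂ)) (1 + z) = w + A / (1 + z - 1)) :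
    ∫ u in Ioi (0 : ℝ), ((summatory f (Real.exp u) * Real.exp (-u) - A : ℝ) : ℂ) *
        Complex.exp (-z * u) = (w - A) / (1 + z) := by
  have hz0 : z ≠ 0 := fun h => by simp [h] at hz
  have hs0 : 1 + z ≠ 0 := Complex.ne_zero_of_one_lt_re (by simpa using hz)
  have hexp : IntegrableOn (fun u : ℝ => Complex.exp (-z * u)) (Ioi 0) :=
    integrableOn_exp_mul_complex_Ioi (by simpa using hz) 0
  simp only [Complex.ofReal_sub, sub_mul]
  rw [integral_sub (integrableOn_summatory_mul_exp hf hC hz) (hexp.const_mul _),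
    integral_summatory_mul_exp hf hC hz, integral_const_mul,
    integral_exp_mul_complex_Ioi (by simpa using hz) 0, hw]
  simp only [Complex.ofReal_zero, mul_zero, Complex.exp_zero, add_sub_cancel_left]
  field_simp
  ring

/-- The Wiener–Ikehara theorem, under an a priori linear bound on the summatory function. -/
theorem tendsto_summatory_div_of_LSeries (hf : ∀ n, 0 ≤ f n)
    (hC : ∀ x, 1 ≤ x → summatory f x ≤ C * x) (A : ℝ) {G : ℂ → ℂ}
    (hG : ContinuousOn G {s | 1 ≤ s.re})
    (hL : ∀ s : ℂ, 1 < s.re → LSeries (fun n => (f n : ℂ)) s = G s + A / (s - 1)) :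
    Tendsto (fun x => summatory f x / x) atTop (𝓝 A) := by
  set F : ℝ → ℝ := fun u => summatory f (Real.exp u) * Real.exp (-u) - A with hF
  have hbound : ∀ u, 0 < u → |F u| ≤ C + |A| := by
    intro u hu
    rw [hF, ← abs_of_nonneg ((summatory_exp_mul_exp_neg_nonneg hf u).trans
      (summatory_exp_mul_exp_neg_le hC hu))]
    exact (abs_sub _ _).trans (add_le_add_left (abs_le_abs_of_nonneg
      (summatory_exp_mul_exp_neg_nonneg hf u) (summatory_exp_mul_exp_neg_le hC hu)) _)
  have hcont : ContinuousOn (fun z : ℂ => (G (1 + z) - A) / (1 + z)) {z | 0 ≤ z.re} := by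
    refine ((hG.comp (by fun_prop) fun z hz => ?_).sub continuousOn_const).div (by fun_prop)
      fun z hz hz0 => ?_
    · simpa using hz
    · have hre := congrArg Complex.re hz0
      rw [Complex.add_re, Complex.one_re, Complex.zero_re] at hre
      have hz' : 0 ≤ z.re := hz
      linarith
  have hlim := ((slowlyDecreasing_summatory hf hC A).tendsto_zero_of_laplace
    ((measurable_summatory_exp hf).sub_const A) hbound hcont
    fun z hz => integral_summatory_sub_mul_exp hf hC hz (hL _ (by simpa using hz))).add_const A
  rw [zero_add] at hlim
  refine (hlim.comp Real.tendsto_log_atTop).congr' ?_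
  filter_upwards [eventually_gt_atTop 0] with x hx
  simp only [Function.comp_apply, sub_add_cancel, Real.exp_neg, Real.exp_log hx, div_eq_mul_inv]

end WienerIkehara

section TwistSum

open Finset

variable {F : Type*} [Field F] [Fintype F]

lemma ringChar_ne_two_of_card_mod_four (h : Fintype.card F % 4 = 1) : ringChar F ≠ 2 := fun hF => by
  have := FiniteField.even_card_iff_char_two.1 hF
  omega

variable [DecidableEq F]

local notation "χ" => quadraticChar F

/-- The character sum `∑ₓ χ(x³ + kx)` over a finite field, which is minus the trace of Frobenius of
the curve `y² = x³ + kx`. -/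
def twistSum (k : F) : ℤ := ∑ x : F, χ (x ^ 3 + k * x)

lemma card_points_eq (hF : ringChar F ≠ 2) :
    (Nat.card {xy : F × F // xy.2 ^ 2 = xy.1 ^ 3 + xy.1} : ℤ)
      = Fintype.card F + twistSum (1 : F) := by
  have hfibers : Nat.card {xy : F × F // xy.2 ^ 2 = xy.1 ^ 3 + xy.1}
      = ∑ x : F, Nat.card {y : F // y ^ 2 = x ^ 3 + x} := by
    rw [← Nat.card_sigma]
    exact Nat.card_congr ⟨fun z => ⟨z.1.1, z.1.2, z.2⟩, fun z => ⟨(z.1, z.2.1), z.2.2⟩,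
      fun _ => rfl, fun _ => rfl⟩
  have hfiber (x : F) : (Nat.card {y : F // y ^ 2 = x ^ 3 + x} : ℤ) = χ (x ^ 3 + x) + 1 := by
    rw [← quadraticChar_card_sqrts hF, Set.toFinset_card, Nat.card_eq_fintype_card]
    rfl
  rw [hfibers, Nat.cast_sum]
  simp only [hfiber, sum_add_distrib, twistSum, one_mul, sum_const, card_univ, nsmul_eq_mul,
    mul_one]
  exact add_comm _ _

lemma twistSum_zero (hF : ringChar F ≠ 2) : twistSum (0 : F) = 0 := by
  rw [← quadraticChar_sum_zero hF]
  refine sum_congr rfl fun x _ => ?_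
  rcases eq_or_ne x 0 with rfl | hx
  · simp
  · rw [zero_mul, add_zero, pow_succ, map_mul, quadraticChar_sq_one' hx, one_mul]

lemma twistSum_mul_sq (k : F) {c : F} (hc : c ≠ 0) : twistSum (k * c ^ 2) = χ c * twistSum k := by
  rw [twistSum, ← Equiv.sum_comp (Equiv.mulLeft₀ c hc), twistSum, mul_sum]
  refine sum_congr rfl fun x _ => ?_
  rw [Equiv.mulLeft₀_apply,
    show (c * x) ^ 3 + k * c ^ 2 * (c * x) = c ^ 2 * (c * (x ^ 3 + k * x)) by ring,
    map_mul, map_mul, quadraticChar_sq_one' hc, one_mul]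

lemma twistSum_eq_zero (hneg : χ (-1) = -1) (k : F) : twistSum k = 0 := by
  have h := twistSum_mul_sq k (neg_ne_zero.2 (one_ne_zero (α := F)))
  rw [hneg, neg_one_sq, mul_one] at h
  linarith

lemma twistSum_sq_eq_of_quadraticChar_eq {k m : F} (hk : k ≠ 0) (hm : m ≠ 0) (h : χ k = χ m) :
    twistSum k ^ 2 = twistSum m ^ 2 := by
  have hone : χ (k / m) = 1 := by
    have hmul : χ (k / m) * χ m = χ m := by rw [← map_mul, div_mul_cancel₀ _ hm, h]
    exact mul_right_cancel₀ (quadraticChar_eq_zero_iff.not.2 hm) (hmul.trans (one_mul _).symm)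
  obtain ⟨c, hc⟩ := (quadraticChar_one_iff_isSquare (div_ne_zero hk hm)).1 hone
  have hc0 : c ≠ 0 := by
    rintro rfl
    exact div_ne_zero hk hm (hc.trans (mul_zero 0))
  have hkm : k = m * c ^ 2 := by rw [sq, ← hc, mul_div_cancel₀ _ hm]
  rw [hkm, twistSum_mul_sq m hc0, mul_pow, quadraticChar_sq_one hc0, one_mul]

lemma sum_quadraticChar_mul_one_sub (hF : ringChar F ≠ 2) :
    ∑ x : F, χ (x * (1 - x)) = -χ (-1) := by
  have h := jacobiSum_nontrivial_inv (quadraticChar_ne_one hF)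
  rw [(quadraticChar_isQuadratic F).inv, jacobiSum] at h
  simpa only [map_mul] using h

lemma sum_quadraticChar_add_mul_add (hF : ringChar F ≠ 2) (a b : F) :
    ∑ k : F, χ ((a + k) * (b + k)) = (if a = b then (Fintype.card F : ℤ) else 0) - 1 := by
  split_ifs with hab
  · rw [← Equiv.sum_comp (Equiv.subRight a), ← hab]
    have hsq (k : F) : χ ((a + Equiv.subRight a k) * (a + Equiv.subRight a k))
        = 1 - if k = 0 then 1 else 0 := by
      rw [Equiv.subRight_apply, add_sub_cancel, ← sq]
      split_ifs with hk
      · simp [hk]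
      · rw [quadraticChar_sq_one' hk, sub_zero]
    simp only [hsq, sum_sub_distrib, sum_const, card_univ, nsmul_eq_mul, mul_one,
      sum_ite_eq', mem_univ, if_true]
  · have hc : b - a ≠ 0 := sub_ne_zero.2 (Ne.symm hab)
    rw [← Equiv.sum_comp
      ((Equiv.mulLeft₀ (-(b - a)) (neg_ne_zero.2 hc)).trans (Equiv.addLeft (-a)))]
    have hsub (x : F) : χ ((a + (-a + -(b - a) * x)) * (b + (-a + -(b - a) * x)))
        = χ (-1) * χ (x * (1 - x)) := by
      rw [show (a + (-a + -(b - a) * x)) * (b + (-a + -(b - a) * x))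
        = (b - a) ^ 2 * (-1 * (x * (1 - x))) by ring, map_mul, quadraticChar_sq_one' hc, one_mul,
        map_mul]
    simp only [Equiv.trans_apply, Equiv.mulLeft₀_apply, Equiv.coe_addLeft, hsub]
    rw [← mul_sum, sum_quadraticChar_mul_one_sub hF, mul_neg, ← map_mul]
    simp

lemma quadraticChar_neg_one_of_card_mod_four (h : Fintype.card F % 4 = 1) : χ (-1) = 1 := by
  rw [quadraticChar_neg_one (ringChar_ne_two_of_card_mod_four h), ZMod.χ₄_nat_one_mod_four h]

lemma sum_quadraticChar_mul_ite_sq_eq (h : Fintype.card F % 4 = 1) {x : F} (hx : x ≠ 0) :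
    ∑ y : F, χ (x * y) * ((if x ^ 2 = y ^ 2 then (Fintype.card F : ℤ) else 0) - 1)
      = 2 * Fintype.card F := by
  have hF := ringChar_ne_two_of_card_mod_four h
  have hroots : univ.filter (fun y : F => x ^ 2 = y ^ 2) = {x, -x} := by
    ext y
    simp only [mem_filter, mem_univ, true_and, mem_insert, mem_singleton, eq_comm (a := x ^ 2),
      sq_eq_sq_iff_eq_or_eq_neg]
  have hzero : ∑ y : F, χ (x * y) = 0 := by
    simp only [map_mul, ← mul_sum, quadraticChar_sum_zero hF, mul_zero]
  have hxx : χ (x * x) = 1 := by rw [← sq, quadraticChar_sq_one' hx]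
  have hxnx : χ (x * -x) = 1 := by
    rw [mul_neg, ← neg_one_mul, map_mul, hxx, mul_one, quadraticChar_neg_one_of_card_mod_four h]
  simp only [mul_sub, sum_sub_distrib, mul_one, hzero, sub_zero, mul_ite, mul_zero]
  have hne : x ≠ -x :=
    Ne.symm (mt (Ring.eq_self_iff_eq_zero_of_char_ne_two hF).1 hx)
  rw [← sum_filter, hroots, sum_pair hne, hxx, hxnx]
  ring

lemma sum_twistSum_sq (h : Fintype.card F % 4 = 1) :
    ∑ k : F, twistSum k ^ 2 = 2 * Fintype.card F * (Fintype.card F - 1) := by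
  have hF := ringChar_ne_two_of_card_mod_four h
  have hexpand (k : F) : twistSum k ^ 2
      = ∑ x : F, ∑ y : F, χ (x * y) * χ ((x ^ 2 + k) * (y ^ 2 + k)) := by
    rw [sq, twistSum, sum_mul_sum]
    refine sum_congr rfl fun x _ => sum_congr rfl fun y _ => ?_
    rw [← map_mul, ← map_mul]
    ring_nf
  calc ∑ k : F, twistSum k ^ 2
      = ∑ x : F, ∑ y : F, χ (x * y) * ∑ k : F, χ ((x ^ 2 + k) * (y ^ 2 + k)) := by
        simp only [hexpand, mul_sum]
        rw [sum_comm]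
        exact sum_congr rfl fun x _ => sum_comm
    _ = ∑ x : F, (2 * Fintype.card F - if x = 0 then (2 * Fintype.card F : ℤ) else 0) := by
        simp only [sum_quadraticChar_add_mul_add hF]
        refine sum_congr rfl fun x _ => ?_
        split_ifs with hx
        · simp [hx]
        · rw [sum_quadraticChar_mul_ite_sq_eq h hx, sub_zero]
    _ = 2 * Fintype.card F * (Fintype.card F - 1) := by
        simp only [sum_sub_distrib, sum_const, card_univ, nsmul_eq_mul, sum_ite_eq', mem_univ,
          if_true]
        ring

lemma exists_twistSum_sq_add_sq (h : Fintype.card F % 4 = 1) :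
    ∃ n : F, twistSum (1 : F) ^ 2 + twistSum n ^ 2 = 4 * Fintype.card F := by
  have hF := ringChar_ne_two_of_card_mod_four h
  obtain ⟨n, hn⟩ := quadraticChar_exists_neg_one hF
  have hn0 : n ≠ 0 := by
    rintro rfl
    simp at hn
  set P := twistSum (1 : F) ^ 2
  set Q := twistSum n ^ 2
  have hterm (k : F) :
      2 * twistSum k ^ 2 = P + Q + χ k * (P - Q) - if k = 0 then P + Q else 0 := by
    split_ifs with hk
    · simp [hk, twistSum_zero hF]
    rcases quadraticChar_dichotomy hk with hχ | hχ
    · rw [twistSum_sq_eq_of_quadraticChar_eq hk one_ne_zero (by rw [hχ, map_one]), hχ]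
      ring
    · rw [twistSum_sq_eq_of_quadraticChar_eq hk hn0 (by rw [hχ, hn]), hχ]
      ring
  have hsum := sum_congr rfl fun k (_ : k ∈ univ) => hterm k
  rw [← mul_sum, sum_twistSum_sq h] at hsum
  simp only [sum_sub_distrib, sum_add_distrib, ← sum_mul, quadraticChar_sum_zero hF, sum_const,
    card_univ, nsmul_eq_mul, sum_ite_eq', mem_univ, if_true] at hsum
  have hcard : (Fintype.card F : ℤ) - 1 ≠ 0 := by
    have := Fintype.one_lt_card (α := F)
    omega
  exact ⟨n, mul_left_cancel₀ hcard (by linarith)⟩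

lemma four_dvd_sum_quadraticChar {i : F} (hF : ringChar F ≠ 2) (hi : i ^ 2 = -1)
    (hneg : χ (-i) = χ i) :
    (4 : ℤ) ∣ ∑ x : F, ((1 + χ x) * (1 + χ (x ^ 2 + 1)) - ((if x = 0 then 2 else 0) +
      (if x = i then 1 + χ i else 0) + (if x = -i then 1 + χ i else 0))) := by
  have hi0 : i ≠ 0 := by
    rintro rfl
    simp at hi
  have hii : i ≠ -i := Ne.symm (mt (Ring.eq_self_iff_eq_zero_of_char_ne_two hF).1 hi0)
  refine dvd_sum fun x _ => ?_
  rcases eq_or_ne x 0 with rfl | hx0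
  · simp [hi0.symm, hi0]
  rcases eq_or_ne x i with rfl | hxi
  · simp [hi, hi0, hii]
  rcases eq_or_ne x (-i) with rfl | hxni
  · simp [hi, hi0, hii.symm, hneg]
  have hx1 : x ^ 2 + 1 ≠ 0 := by
    rw [show x ^ 2 + 1 = (x - i) * (x + i) by linear_combination hi]
    exact mul_ne_zero (sub_ne_zero.2 hxi) fun h => hxni (eq_neg_of_add_eq_zero_left h)
  simp only [hx0, hxi, hxni, if_false, add_zero, sub_zero]
  rcases quadraticChar_dichotomy hx0 with h | h <;>
    rcases quadraticChar_dichotomy hx1 with h' | h' <;> rw [h, h'] <;> norm_num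

lemma sum_one_add_mul_one_add (hF : ringChar F ≠ 2) {i : F} (hi : i ^ 2 = -1) (hii : i ≠ -i) :
    ∑ x : F, (1 + χ x) * (1 + χ (x ^ 2 + 1)) = Fintype.card F - 1 + twistSum (1 : F) := by
  have hquad : ∑ x : F, χ (x ^ 2 + 1) = -1 := by
    have hsum := sum_quadraticChar_add_mul_add hF i (-i)
    rw [if_neg hii, zero_sub] at hsum
    rw [← hsum]
    refine sum_congr rfl fun x _ => ?_
    congr 1
    linear_combination hi
  have hterm (x : F) : (1 + χ x) * (1 + χ (x ^ 2 + 1))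
      = 1 + χ x + χ (x ^ 2 + 1) + χ (x ^ 3 + 1 * x) := by
    rw [show x ^ 3 + 1 * x = x * (x ^ 2 + 1) by ring, map_mul]
    ring
  simp only [hterm, sum_add_distrib, hquad, quadraticChar_sum_zero hF, sum_const, card_univ,
    nsmul_eq_mul]
  rw [twistSum]
  ring

lemma four_dvd_twistSum_one_sub_two (h : Fintype.card F % 4 = 1) :
    (4 : ℤ) ∣ twistSum (1 : F) - 2 := by
  have hF := ringChar_ne_two_of_card_mod_four h
  have hneg := quadraticChar_neg_one_of_card_mod_four h
  obtain ⟨i, hi⟩ := (quadraticChar_one_iff_isSquare (neg_ne_zero.2 one_ne_zero)).1 hneg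
  rw [← sq] at hi
  have hi0 : i ≠ 0 := by
    rintro rfl
    simp at hi
  have hdvd := four_dvd_sum_quadraticChar hF hi.symm
    (by rw [← neg_one_mul, map_mul, hneg, one_mul])
  have hii : i ≠ -i :=
    Ne.symm (mt (Ring.eq_self_iff_eq_zero_of_char_ne_two hF).1 hi0)
  rw [sum_sub_distrib, sum_one_add_mul_one_add hF hi.symm hii] at hdvd
  simp only [sum_add_distrib, sum_ite_eq', mem_univ, if_true] at hdvd
  rcases quadraticChar_dichotomy hi0 with hχ | hχ <;> rw [hχ] at hdvd <;> omega

end TwistSum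

section FrobeniusTrace

/-- The trace of Frobenius `a_p` of `y² = x³ + x` at the prime `p`. -/
noncomputable def frobeniusTrace (p : ℕ) : ℝ :=
  (p : ℝ) - (Nat.card {xy : ZMod p × ZMod p // xy.2 ^ 2 = xy.1 ^ 3 + xy.1} : ℝ)

variable {p : ℕ} [Fact p.Prime]

lemma frobeniusTrace_eq_neg_twistSum (hp : p ≠ 2) :
    frobeniusTrace p = -twistSum (1 : ZMod p) := by
  have hcard := card_points_eq (F := ZMod p) (by rwa [ZMod.ringChar_zmod_n])
  rw [ZMod.card] at hcard
  rw [frobeniusTrace, ← Int.cast_natCast (Nat.card _), hcard]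
  push_cast
  ring

lemma frobeniusTrace_eq_zero (h : p % 4 = 3) : frobeniusTrace p = 0 := by
  have hp : p ≠ 2 := by omega
  have hneg : quadraticChar (ZMod p) (-1) = -1 := by
    rw [quadraticChar_neg_one (by rwa [ZMod.ringChar_zmod_n]), ZMod.card,
      ZMod.χ₄_nat_three_mod_four h]
  rw [frobeniusTrace_eq_neg_twistSum hp, twistSum_eq_zero hneg, Int.cast_zero, neg_zero]

lemma exists_frobeniusTrace_sq_eq (h : p % 4 = 1) :
    ∃ a b : ℤ, a % 2 = 1 ∧ b % 2 = 0 ∧ a ^ 2 + b ^ 2 = p ∧ frobeniusTrace p ^ 2 = 4 * a ^ 2 := by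
  have hcard : Fintype.card (ZMod p) % 4 = 1 := by rwa [ZMod.card]
  obtain ⟨n, hn⟩ := exists_twistSum_sq_add_sq hcard
  obtain ⟨m, hm⟩ := four_dvd_twistSum_one_sub_two hcard
  have hS : twistSum (1 : ZMod p) = 2 * (2 * m + 1) := by linarith
  rw [ZMod.card, hS] at hn
  have heven : Even (twistSum n) := by
    rw [← Int.even_pow' two_ne_zero]
    exact ⟨2 * p - 2 * (2 * m + 1) ^ 2, by linarith⟩
  obtain ⟨b, hb⟩ := heven
  have hab : (2 * m + 1) ^ 2 + b ^ 2 = (p : ℤ) := by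
    rw [hb] at hn
    linarith
  refine ⟨2 * m + 1, b, by omega, ?_, hab, ?_⟩
  · by_contra hodd
    have hsq : b ^ 2 % 2 = 1 := by
      rw [← Int.odd_iff, Int.odd_pow' two_ne_zero, Int.odd_iff]
      omega
    have hsq' : (2 * m + 1) ^ 2 % 2 = 1 := by
      rw [← Int.odd_iff, Int.odd_pow' two_ne_zero]
      exact odd_two_mul_add_one m
    omega
  · rw [frobeniusTrace_eq_neg_twistSum (by omega), hS]
    push_cast
    ring

end FrobeniusTrace

section PowerSum

open Finset

variable {R : Type*} [CommRing R]

/-- The power sum `αᵏ + βᵏ` of the roots `α, β` of `X² - tX + d`, given by its recurrence. -/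
def powerSum (t d : R) : ℕ → R
  | 0 => 2
  | 1 => t
  | k + 2 => t * powerSum t d (k + 1) - d * powerSum t d k

lemma map_powerSum {S : Type*} [CommRing S] (f : R →+* S) (t d : R) (k : ℕ) :
    f (powerSum t d k) = powerSum (f t) (f d) k := by
  induction k using Nat.twoStepInduction with
  | zero => exact map_ofNat f 2
  | one => rfl
  | more k ih ih' => simp only [powerSum, map_sub, map_mul, ih, ih']

lemma powerSum_mul_apply_zero {t d : R} {u : ℕ → R} (hu₁ : u 1 = t * u 0)
    (hu : ∀ k, u (k + 2) = t * u (k + 1) - d * u k) (k : ℕ) :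
    powerSum t d (k + 2) * u 0 = u (k + 2) - d * u k := by
  induction k using Nat.twoStepInduction with
  | zero => simp only [powerSum, hu, hu₁]; ring
  | one => simp only [powerSum, hu, hu₁]; ring
  | more k ih ih' =>
    rw [powerSum, sub_mul, mul_assoc, mul_assoc, ih, ih', hu (k + 2)]
    linear_combination d * hu k

/-- Newton's identities: in terms of generating series, `∑ s(j)Xʲ = -X P'/P` for `P = 1 - tX + dX²`,
while `u` has generating series proportional to `1/P`. -/
lemma sum_powerSum_mul {t d : R} {u : ℕ → R} (hu₁ : u 1 = t * u 0)
    (hu : ∀ k, u (k + 2) = t * u (k + 1) - d * u k) (k : ℕ) :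
    ∑ j ∈ range k, powerSum t d (j + 1) * u (k - (j + 1)) = k * u k := by
  induction k using Nat.twoStepInduction with
  | zero => simp only [range_zero, sum_empty, Nat.cast_zero, zero_mul]
  | one => simp only [sum_range_one, powerSum, hu₁, Nat.cast_one, one_mul]
  | more k ih ih' =>
    have hrec : ∑ j ∈ range k, powerSum t d (j + 1) * u (k + 2 - (j + 1))
        = t * ∑ j ∈ range k, powerSum t d (j + 1) * u (k + 1 - (j + 1))
          - d * ∑ j ∈ range k, powerSum t d (j + 1) * u (k - (j + 1)) := by
      rw [mul_sum, mul_sum, ← sum_sub_distrib]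
      refine sum_congr rfl fun j hj => ?_
      obtain ⟨m, rfl⟩ : ∃ m, k = m + (j + 1) := ⟨k - (j + 1), by have := mem_range.1 hj; omega⟩
      rw [show m + (j + 1) + 2 - (j + 1) = m + 2 by omega,
        show m + (j + 1) + 1 - (j + 1) = m + 1 by omega, Nat.add_sub_cancel, hu]
      ring
    rw [sum_range_succ, Nat.sub_self] at ih'
    rw [sum_range_succ, sum_range_succ, hrec, show k + 2 - (k + 1 + 1) = 0 by omega,
      show k + 2 - (k + 1) = 1 by omega, powerSum_mul_apply_zero hu₁ hu, hu₁, ih, hu k]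
    push_cast at ih' ⊢
    linear_combination t * ih'

lemma powerSum_one_eq_cos {t : ℝ} (ht : |t| ≤ 2) (k : ℕ) :
    powerSum t 1 k = 2 * Real.cos (k * Real.arccos (t / 2)) := by
  have ht' := abs_le.1 ht
  have hcos : Real.cos (Real.arccos (t / 2)) = t / 2 :=
    Real.cos_arccos (by linarith) (by linarith)
  induction k using Nat.twoStepInduction with
  | zero => simp only [powerSum, Nat.cast_zero, zero_mul, Real.cos_zero, mul_one]
  | one => rw [powerSum, Nat.cast_one, one_mul, hcos]; ring
  | more k ih ih' =>
    set θ := Real.arccos (t / 2)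
    rw [powerSum, ih, ih', show ((k + 2 : ℕ) : ℝ) * θ = ((k + 1 : ℕ) : ℝ) * θ + θ by
      push_cast; ring,
      show (k : ℝ) * θ = ((k + 1 : ℕ) : ℝ) * θ - θ by push_cast; ring, Real.cos_add, Real.cos_sub,
      hcos]
    ring

lemma abs_powerSum_one_le {t : ℝ} (ht : |t| ≤ 2) (k : ℕ) : |powerSum t 1 k| ≤ 2 := by
  rw [powerSum_one_eq_cos ht, abs_mul, abs_two]
  exact mul_le_of_le_one_right zero_le_two (Real.abs_cos_le_one _)

lemma powerSum_zero_neg_one_even (k : ℕ) : powerSum (0 : R) (-1) (2 * k) = 2 := by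
  induction k with
  | zero => rfl
  | succ k ih => rw [mul_add_one, powerSum, ih]; ring

lemma powerSum_zero_odd (d : R) (k : ℕ) : powerSum 0 d (2 * k + 1) = 0 := by
  induction k with
  | zero => rfl
  | succ k ih => rw [show 2 * (k + 1) + 1 = 2 * k + 1 + 2 by ring, powerSum, ih]; ring

lemma powerSum_zero_zero_succ (k : ℕ) : powerSum (0 : R) 0 (k + 1) = 0 := by
  cases k <;> simp only [powerSum, zero_mul, sub_zero]

end PowerSum

section LogDerivCoeff

open Finset

lemma sum_divisors_eq_sum_primeFactors {M : Type*} [AddCommMonoid M] {n : ℕ} (hn : n ≠ 0)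
    {F : ℕ → M} (hF : ∀ d, ¬ IsPrimePow d → F d = 0) :
    ∑ d ∈ n.divisors, F d
      = ∑ p ∈ n.primeFactors, ∑ j ∈ range (n.factorization p), F (p ^ (j + 1)) := by
  rw [← sum_filter_of_ne (p := IsPrimePow) fun d _ hd => not_imp_comm.1 (hF d) hd, sum_sigma']
  symm
  refine sum_bij (fun x _ => x.1 ^ (x.2 + 1)) ?_ ?_ ?_ fun _ _ => rfl
  · rintro ⟨p, j⟩ h
    simp only [mem_sigma, mem_range, Nat.mem_primeFactors] at h
    obtain ⟨⟨hp, -, -⟩, hj⟩ := h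
    simp only [mem_filter, Nat.mem_divisors]
    exact ⟨⟨(hp.pow_dvd_iff_le_factorization hn).2 hj, hn⟩, hp.isPrimePow.pow j.succ_ne_zero⟩
  · rintro ⟨p, j⟩ h ⟨q, k⟩ h' heq
    simp only [mem_sigma, mem_range, Nat.mem_primeFactors] at h h'
    obtain ⟨rfl, rfl⟩ := Nat.Prime.pow_inj h.1.1 h'.1.1 heq
    rfl
  · intro d hd
    simp only [mem_filter, Nat.mem_divisors] at hd
    obtain ⟨⟨hdvd, -⟩, p, k, hp, hk, rfl⟩ := hd
    obtain ⟨j, rfl⟩ := Nat.exists_eq_succ_of_ne_zero hk.ne'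
    refine ⟨⟨p, j⟩, ?_, rfl⟩
    simp only [mem_sigma, mem_range, Nat.mem_primeFactors]
    exact ⟨⟨hp.nat_prime, (dvd_pow_self p j.succ_ne_zero).trans hdvd, hn⟩,
      (hp.nat_prime.pow_dvd_iff_le_factorization hn).1 hdvd⟩

/-- The coefficients of `-L'/L` for the Euler product `L(s) = ∏ₚ (1 - t(p)p⁻ˢ + d(p)p⁻²ˢ)⁻¹`: at a
prime power `pᵏ` the value is `log p` times the `k`-th power sum of the local parameters. -/
noncomputable def logDerivCoeff (t d : ℕ → ℝ) (n : ℕ) : ℝ :=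
  if IsPrimePow n then
    Real.log n.minFac * powerSum (t n.minFac) (d n.minFac) (n.factorization n.minFac)
  else 0

variable {t d : ℕ → ℝ} {p : ℕ}

lemma logDerivCoeff_of_not_isPrimePow {n : ℕ} (hn : ¬ IsPrimePow n) : logDerivCoeff t d n = 0 :=
  if_neg hn

lemma logDerivCoeff_pow (hp : p.Prime) (k : ℕ) :
    logDerivCoeff t d (p ^ (k + 1)) = Real.log p * powerSum (t p) (d p) (k + 1) := by
  rw [logDerivCoeff, if_pos (hp.isPrimePow.pow k.succ_ne_zero), hp.pow_minFac k.succ_ne_zero,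
    hp.factorization_pow, Finsupp.single_eq_same]

lemma logDerivCoeff_prime (hp : p.Prime) : logDerivCoeff t d p = Real.log p * t p := by
  have := logDerivCoeff_pow (t := t) (d := d) hp 0
  rwa [zero_add, pow_one] at this

lemma log_eq_sum_primeFactors {n : ℕ} (hn : n ≠ 0) :
    Real.log n = ∑ p ∈ n.primeFactors, n.factorization p * Real.log p := by
  rw [← ArithmeticFunction.vonMangoldt_sum, sum_divisors_eq_sum_primeFactors hn
    fun _ => ArithmeticFunction.vonMangoldt_eq_zero_iff.2]
  refine sum_congr rfl fun p hp => ?_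
  rw [sum_congr rfl fun j _ => by rw [ArithmeticFunction.vonMangoldt_apply_pow j.succ_ne_zero,
    ArithmeticFunction.vonMangoldt_apply_prime (Nat.prime_of_mem_primeFactors hp)], sum_const,
    card_range, nsmul_eq_mul]

variable {c : ℕ → ℂ}

lemma sum_range_logDerivCoeff_mul (hp : p.Prime)
    (hc : ∀ n : ℕ, n ≠ 0 → c (p * n) = t p * c n - d p * (if p ∣ n then c (n / p) else 0))
    {n : ℕ} (hn : n ≠ 0) :
    ∑ j ∈ range (n.factorization p), (logDerivCoeff t d (p ^ (j + 1)) : ℂ) * c (n / p ^ (j + 1))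
      = n.factorization p * Real.log p * c n := by
  set e := n.factorization p
  obtain ⟨m, hm, hnm⟩ : ∃ m, ¬ p ∣ m ∧ n = p ^ e * m :=
    ⟨n / p ^ e, Nat.not_dvd_ordCompl hp hn, (Nat.ordProj_mul_ordCompl_eq_self n p).symm⟩
  have hm0 : m ≠ 0 := by
    rintro rfl
    exact hm (dvd_zero p)
  have hstart : c (p ^ 1 * m) = t p * c (p ^ 0 * m) := by
    rw [pow_one, pow_zero, one_mul, hc m hm0, if_neg hm, mul_zero, sub_zero]
  have hstep (k : ℕ) :
      c (p ^ (k + 2) * m) = t p * c (p ^ (k + 1) * m) - d p * c (p ^ k * m) := by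
    have hdiv : p ^ (k + 1) * m / p = p ^ k * m := by
      rw [pow_succ', mul_assoc, Nat.mul_div_cancel_left _ hp.pos]
    rw [show p ^ (k + 2) * m = p * (p ^ (k + 1) * m) by ring,
      hc _ (mul_ne_zero (pow_ne_zero _ hp.ne_zero) hm0),
      if_pos ((dvd_pow_self p k.succ_ne_zero).mul_right m), hdiv]
  have hterm : ∀ j ∈ range e, (logDerivCoeff t d (p ^ (j + 1)) : ℂ) * c (n / p ^ (j + 1))
      = Real.log p * (powerSum (t p : ℂ) (d p) (j + 1) * c (p ^ (e - (j + 1)) * m)) := by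
    intro j hj
    have hdiv : n / p ^ (j + 1) = p ^ (e - (j + 1)) * m := by
      refine Nat.div_eq_of_eq_mul_right (pow_pos hp.pos _) ?_
      rw [← mul_assoc, ← pow_add, Nat.add_sub_cancel' (mem_range.1 hj), ← hnm]
    rw [logDerivCoeff_pow hp, hdiv, Complex.ofReal_mul, mul_assoc]
    congr 2
    exact map_powerSum Complex.ofRealHom _ _ _
  rw [sum_congr rfl hterm, ← mul_sum,
    sum_powerSum_mul (u := fun k => c (p ^ k * m)) hstart hstep e, ← hnm]
  ring

/-- The identity `-L' = (-L'/L) · L` on the level of coefficients. -/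
lemma sum_divisors_logDerivCoeff_mul
    (hc : ∀ p n : ℕ, p.Prime → n ≠ 0 →
      c (p * n) = t p * c n - d p * (if p ∣ n then c (n / p) else 0)) {n : ℕ} (hn : n ≠ 0) :
    ∑ k ∈ n.divisors, (logDerivCoeff t d k : ℂ) * c (n / k) = Real.log n * c n := by
  rw [sum_divisors_eq_sum_primeFactors hn fun k hk => by
    rw [logDerivCoeff_of_not_isPrimePow hk, Complex.ofReal_zero, zero_mul],
    log_eq_sum_primeFactors hn]
  simp only [Complex.ofReal_sum, Complex.ofReal_mul, Complex.ofReal_natCast, sum_mul]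
  exact sum_congr rfl fun p hp =>
    sum_range_logDerivCoeff_mul (Nat.prime_of_mem_primeFactors hp)
      (fun m => hc p m (Nat.prime_of_mem_primeFactors hp)) hn

end LogDerivCoeff

section EulerTrace

open ArithmeticFunction.vonMangoldt

/-- The coefficient `t(p)` of the Euler factor `1 - t(p)p⁻ˢ + χ₄(p)p⁻²ˢ` of the Hecke `L`-function
of the character `π ↦ (π/|π|)²` of `ℤ[i]`. For `p = ππ̄ ≡ 1 mod 4` it equals `(π² + π̄²)/p`. -/
noncomputable def eulerTrace (p : ℕ) : ℝ :=
  if p % 4 = 1 then frobeniusTrace p ^ 2 / p - 2 else 0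

/-- The coefficients of `-L'/L` for the Hecke `L`-function with Euler factors
`1 - t(p)p⁻ˢ + χ₄(p)p⁻²ˢ`. -/
noncomputable def heckeVonMangoldt : ℕ → ℝ :=
  logDerivCoeff eulerTrace fun p => (ZMod.χ₄ p : ℝ)

lemma abs_eulerTrace_le {p : ℕ} (hp : p.Prime) : |eulerTrace p| ≤ 2 := by
  rw [eulerTrace]
  split_ifs with h
  · have := Fact.mk hp
    obtain ⟨a, b, -, -, hab, ha⟩ := exists_frobeniusTrace_sq_eq h
    have hab' : (a : ℝ) ^ 2 + b ^ 2 = p := by exact_mod_cast hab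
    have hp0 : (0 : ℝ) < p := by exact_mod_cast hp.pos
    have hnonneg : 0 ≤ 4 * (a : ℝ) ^ 2 / p := by positivity
    have hle : 4 * (a : ℝ) ^ 2 / p ≤ 4 := by
      rw [div_le_iff₀ hp0]
      nlinarith only [sq_nonneg (b : ℝ), hab']
    rw [ha, abs_le]
    constructor <;> linarith
  · rw [abs_zero]
    exact zero_le_two

lemma residueClass_prime_pow {q : ℕ} (a : ZMod q) {p : ℕ} (hp : p.Prime) {k : ℕ} (hk : k ≠ 0)
    (h : (p : ZMod q) ^ k = a) : residueClass a (p ^ k) = Real.log p := by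
  rw [residueClass, Set.indicator_of_mem (by rw [Set.mem_ofPred, Nat.cast_pow, h]),
    ArithmeticFunction.vonMangoldt_apply_pow hk, ArithmeticFunction.vonMangoldt_apply_prime hp]

lemma abs_heckeVonMangoldt_le (n : ℕ) :
    |heckeVonMangoldt n| ≤ 2 * residueClass (1 : ZMod 4) n := by
  have hnonneg : 0 ≤ 2 * residueClass (1 : ZMod 4) n :=
    mul_nonneg zero_le_two (residueClass_nonneg _ n)
  by_cases hn : IsPrimePow n
  swap
  · rwa [heckeVonMangoldt, logDerivCoeff_of_not_isPrimePow hn, abs_zero]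
  obtain ⟨p, k, hp', hk, rfl⟩ := hn
  have hp := hp'.nat_prime
  obtain ⟨j, rfl⟩ := Nat.exists_eq_succ_of_ne_zero hk.ne'
  have hlog : |Real.log p| = Real.log p := abs_of_nonneg (Real.log_natCast_nonneg p)
  rw [heckeVonMangoldt, logDerivCoeff_pow hp, abs_mul, hlog]
  have hclass (h : (p : ZMod 4) ^ (j + 1) = 1) {s : ℝ} (hs : |s| ≤ 2) :
      Real.log p * |s| ≤ 2 * residueClass (1 : ZMod 4) (p ^ (j + 1)) := by
    rw [residueClass_prime_pow 1 hp j.succ_ne_zero h, mul_comm 2]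
    exact mul_le_mul_of_nonneg_left hs (Real.log_natCast_nonneg p)
  rcases hp.eq_two_or_odd with rfl | hodd
  · simp only [eulerTrace, show ZMod.χ₄ ((2 : ℕ) : ZMod 4) = 0 by decide, Nat.reduceMod,
      Nat.reduceEqDiff, if_false, Int.cast_zero, powerSum_zero_zero_succ, abs_zero, mul_zero]
    exact hnonneg
  rcases Nat.odd_mod_four_iff.1 hodd with h1 | h3
  · rw [ZMod.χ₄_nat_one_mod_four h1, Int.cast_one]
    refine hclass ?_ (abs_powerSum_one_le (abs_eulerTrace_le hp) _)
    rw [← ZMod.natCast_mod, h1, Nat.cast_one, one_pow]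
  · rw [ZMod.χ₄_nat_three_mod_four h3, Int.cast_neg, Int.cast_one, eulerTrace,
      if_neg (by omega : ¬ p % 4 = 1)]
    obtain ⟨m, hm | hm⟩ := Nat.even_or_odd' (j + 1)
    · refine hclass ?_ ?_
      · rw [← ZMod.natCast_mod, h3, hm, pow_mul, show ((3 : ℕ) : ZMod 4) ^ 2 = 1 by decide, one_pow]
      · rw [hm, powerSum_zero_neg_one_even, abs_two]
    · rwa [show powerSum (0 : ℝ) (-1) (j + 1) = 0 by rw [hm, powerSum_zero_odd], abs_zero, mul_zero]

end EulerTrace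

section HeckeCharacter

open Finset

lemma norm_eq_re_sq_add_im_sq (α : GaussianInt) : α.norm = α.re ^ 2 + α.im ^ 2 := by
  rw [Zsqrtd.norm_def]
  ring

/-- The quadratic character of `ℤ[i]` of conductor `2`: it is `1` on elements congruent to `1`, `-1`
on elements congruent to `i`, and `0` on the multiples of `1 + i`. -/
def paritySign (α : GaussianInt) : ℤ :=
  if α.re % 2 = 1 ∧ α.im % 2 = 0 then 1 else if α.re % 2 = 0 ∧ α.im % 2 = 1 then -1 else 0

lemma paritySign_zero : paritySign 0 = 0 := rfl

lemma paritySign_mul (α β : GaussianInt) :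
    paritySign (α * β) = paritySign α * paritySign β := by
  simp only [paritySign, Zsqrtd.re_mul, Zsqrtd.im_mul]
  rcases Int.emod_two_eq α.re with ha | ha <;> rcases Int.emod_two_eq α.im with hb | hb <;>
    rcases Int.emod_two_eq β.re with hc | hc <;> rcases Int.emod_two_eq β.im with hd | hd <;>
    simp [Int.add_emod, Int.mul_emod, ha, hb, hc, hd]

lemma paritySign_eq_zero_of_even_norm {α : GaussianInt} (h : Even α.norm) : paritySign α = 0 := by
  rw [norm_eq_re_sq_add_im_sq, Int.even_add, Int.even_pow' two_ne_zero, Int.even_pow' two_ne_zero,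
    Int.even_iff, Int.even_iff] at h
  rw [paritySign, if_neg (by omega), if_neg (by omega)]

lemma paritySign_eq_one {α : GaussianInt} (hre : α.re % 2 = 1) (him : α.im % 2 = 0) :
    paritySign α = 1 :=
  if_pos ⟨hre, him⟩

/-- The Hecke character `α ↦ ±α²/|α|²` of `ℤ[i]`, with the sign `paritySign α` chosen to make it
invariant under the units. -/
noncomputable def heckeCharacter (α : GaussianInt) : ℂ :=
  paritySign α * (α : ℂ) ^ 2 / (α.norm : ℂ)

lemma heckeCharacter_mul (α β : GaussianInt) :
    heckeCharacter (α * β) = heckeCharacter α * heckeCharacter β := by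
  simp only [heckeCharacter, paritySign_mul, Zsqrtd.norm_mul, GaussianInt.toComplex_mul,
    Int.cast_mul, mul_pow, div_mul_div_comm]
  ring

lemma heckeCharacter_of_even_norm {α : GaussianInt} (h : Even α.norm) : heckeCharacter α = 0 := by
  rw [heckeCharacter, paritySign_eq_zero_of_even_norm h, Int.cast_zero, zero_mul, zero_div]

lemma heckeCharacter_natCast {n : ℕ} (hn : n % 2 = 1) : heckeCharacter n = 1 := by
  have hn0 : (n : ℂ) ≠ 0 := by
    rw [Nat.cast_ne_zero]
    omega
  have hsign : paritySign (n : GaussianInt) = 1 := by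
    refine paritySign_eq_one ?_ ?_
    · rw [Zsqrtd.re_natCast]; omega
    · rw [Zsqrtd.im_natCast]; rfl
  rw [heckeCharacter, hsign, map_natCast, Zsqrtd.norm_natCast]
  push_cast
  field_simp

lemma heckeCharacter_add_star {π : GaussianInt} (hre : π.re % 2 = 1) (him : π.im % 2 = 0) :
    heckeCharacter π + heckeCharacter (star π) = ((4 * π.re ^ 2 / π.norm - 2 : ℝ) : ℂ) := by
  have hnorm : (π.norm : ℂ) ≠ 0 := by
    rw [Int.cast_ne_zero, Ne, GaussianInt.norm_eq_zero]
    rintro rfl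
    simp at hre
  have hsign : paritySign (star π) = 1 :=
    paritySign_eq_one (by rwa [Zsqrtd.re_star]) (by rw [Zsqrtd.im_star]; omega)
  have hnorm_eq : (π.norm : ℂ) = π.re ^ 2 + π.im ^ 2 := by
    rw [norm_eq_re_sq_add_im_sq]
    push_cast
    ring
  rw [heckeCharacter, heckeCharacter, paritySign_eq_one hre him, hsign, Zsqrtd.norm_conj,
    GaussianInt.toComplex_star, GaussianInt.toComplex_def]
  push_cast
  rw [map_add, map_mul, Complex.conj_I, map_intCast, map_intCast]
  field_simp
  linear_combination 2 * (π.im : ℂ) ^ 2 * Complex.I_sq + 2 * hnorm_eq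

/-- The Gaussian integers of norm `n`. -/
noncomputable def normFiber (n : ℕ) : Finset GaussianInt :=
  ((Icc (-(n : ℤ)) n ×ˢ Icc (-(n : ℤ)) n).image fun v => (⟨v.1, v.2⟩ : GaussianInt)).filter
    fun α => α.norm = n

lemma mem_normFiber {n : ℕ} {α : GaussianInt} : α ∈ normFiber n ↔ α.norm = n := by
  simp only [normFiber, mem_filter, mem_image, mem_product, mem_Icc, and_iff_right_iff_imp]
  intro h
  rw [norm_eq_re_sq_add_im_sq] at h
  have hre : |α.re| ≤ α.re ^ 2 := (Int.le_self_sq _).trans_eq (sq_abs _)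
  have him : |α.im| ≤ α.im ^ 2 := (Int.le_self_sq _).trans_eq (sq_abs _)
  refine ⟨(α.re, α.im), ⟨abs_le.1 ?_, abs_le.1 ?_⟩, rfl⟩ <;> nlinarith only [h, hre, him]

/-- The sum of the Hecke character over the elements of norm `n`, which is four times its sum over
the ideals of norm `n`. -/
noncomputable def heckeSum (n : ℕ) : ℂ := ∑ α ∈ normFiber n, heckeCharacter α

end HeckeCharacter

section HeckeRelations

open Finset

open scoped Classical in
lemma sum_normFiber_filter_dvd {ρ : GaussianInt} {m : ℕ} (hm : m ≠ 0) (hρ : ρ.norm = m) (n : ℕ) :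
    ∑ α ∈ normFiber (m * n) with ρ ∣ α, heckeCharacter α = heckeCharacter ρ * heckeSum n := by
  have hρ0 : ρ ≠ 0 := by
    rintro rfl
    rw [Zsqrtd.norm_zero] at hρ
    exact hm (by exact_mod_cast hρ.symm)
  have himage : (normFiber (m * n)).filter (ρ ∣ ·) = (normFiber n).image (ρ * ·) := by
    ext α
    simp only [mem_filter, mem_image, mem_normFiber]
    constructor
    · rintro ⟨hα, β, rfl⟩
      refine ⟨β, ?_, rfl⟩
      rw [Zsqrtd.norm_mul, hρ, Nat.cast_mul] at hα
      exact mul_left_cancel₀ (Nat.cast_ne_zero.2 hm) hα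
    · rintro ⟨β, hβ, rfl⟩
      exact ⟨by rw [Zsqrtd.norm_mul, hρ, hβ, Nat.cast_mul], dvd_mul_right _ _⟩
  rw [himage, sum_image fun _ _ _ _ => mul_left_cancel₀ hρ0, heckeSum, mul_sum]
  exact sum_congr rfl fun _ _ => heckeCharacter_mul _ _

open scoped Classical in
lemma sum_normFiber_filter_natCast_dvd {p : ℕ} (hp : p % 2 = 1) (n : ℕ) :
    ∑ α ∈ normFiber (p * n) with (p : GaussianInt) ∣ α, heckeCharacter α
      = if p ∣ n then heckeSum (n / p) else 0 := by
  have hp0 : p ≠ 0 := by omega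
  split_ifs with h
  · obtain ⟨m, rfl⟩ := h
    rw [Nat.mul_div_cancel_left m (Nat.pos_of_ne_zero hp0), ← mul_assoc,
      sum_normFiber_filter_dvd (mul_ne_zero hp0 hp0) (by rw [Zsqrtd.norm_natCast, Nat.cast_mul]),
      heckeCharacter_natCast hp, one_mul]
  · refine sum_eq_zero fun α hα => absurd ?_ h
    obtain ⟨hα, β, rfl⟩ := mem_filter.1 hα
    rw [mem_normFiber, Zsqrtd.norm_mul, Zsqrtd.norm_natCast, Nat.cast_mul, mul_assoc] at hα
    exact Int.natCast_dvd_natCast.1 ⟨_, (mul_left_cancel₀ (Nat.cast_ne_zero.2 hp0) hα).symm⟩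

variable {p : ℕ} {π α : GaussianInt}

lemma prime_of_norm_eq_prime (hp : p.Prime) (hπ : π.norm = p) : Prime π := by
  rw [← irreducible_iff_prime]
  refine ⟨fun hunit => ?_, fun a b hab => ?_⟩
  · rw [← Zsqrtd.norm_eq_one_iff, hπ, Int.natAbs_natCast] at hunit
    exact hp.one_lt.ne' hunit
  · have hnorm : a.norm.natAbs * b.norm.natAbs = p := by
      rw [← Int.natAbs_mul, ← Zsqrtd.norm_mul, ← hab, hπ, Int.natAbs_natCast]
    rw [← Zsqrtd.norm_eq_one_iff, ← Zsqrtd.norm_eq_one_iff]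
    exact (Nat.prime_mul_iff.1 (hnorm ▸ hp)).symm.imp And.right And.right

lemma dvd_or_star_dvd (hπ : Prime π) (h : π ∣ (α.norm : GaussianInt)) : π ∣ α ∨ star π ∣ α := by
  rw [Zsqrtd.norm_eq_mul_conj] at h
  refine (hπ.dvd_or_dvd h).imp_right ?_
  rintro ⟨γ, hγ⟩
  exact ⟨star γ, by rw [← star_star α, hγ, star_mul, mul_comm]⟩

lemma natCast_eq_mul_star (hπ : π.norm = p) : (p : GaussianInt) = π * star π := by
  rw [← Zsqrtd.norm_eq_mul_conj, hπ, Int.cast_natCast]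

lemma not_star_dvd (hp : p.Prime) (hp2 : p ≠ 2) (hπ : π.norm = p) (hre : π.re ≠ 0) :
    ¬ star π ∣ π := by
  intro hdvd
  have htrace : star π ∣ ((2 * π.re : ℤ) : GaussianInt) := by
    have hsum : ((2 * π.re : ℤ) : GaussianInt) = π + star π := by
      ext
      · simp only [Zsqrtd.re_intCast, Zsqrtd.re_add, Zsqrtd.re_star, two_mul]
      · simp only [Zsqrtd.im_intCast, Zsqrtd.im_add, Zsqrtd.im_star, add_neg_cancel]
    exact hsum ▸ dvd_add hdvd dvd_rfl
  obtain ⟨γ, hγ⟩ := htrace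
  have hpi : Prime (p : ℤ) := Nat.prime_iff_prime_int.1 hp
  have hpdvd : (p : ℤ) ∣ 2 * π.re := by
    refine hpi.dvd_of_dvd_pow (n := 2) ⟨γ.norm, ?_⟩
    rw [← hπ, ← Zsqrtd.norm_conj π, ← Zsqrtd.norm_mul, ← hγ, Zsqrtd.norm_intCast, sq]
  have hre_dvd : (p : ℤ) ∣ π.re := by
    refine (hpi.dvd_or_dvd hpdvd).resolve_left fun h2 => hp2 ?_
    exact (Nat.prime_dvd_prime_iff_eq hp Nat.prime_two).1 (Int.natCast_dvd_natCast.1 h2)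
  have hlt : |π.re| < p := by
    rw [norm_eq_re_sq_add_im_sq] at hπ
    have : (2 : ℤ) ≤ p := by exact_mod_cast hp.two_le
    refine abs_lt_of_sq_lt_sq ?_ (Nat.cast_nonneg p)
    nlinarith only [sq_nonneg π.im, hπ, this]
  exact hre (Int.eq_zero_of_abs_lt_dvd hre_dvd hlt)

lemma natCast_dvd_iff (hp : p.Prime) (hp2 : p ≠ 2) (hπ : π.norm = p) (hre : π.re ≠ 0) :
    (p : GaussianInt) ∣ α ↔ π ∣ α ∧ star π ∣ α := by
  rw [natCast_eq_mul_star hπ]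
  refine ⟨fun h => ⟨(dvd_mul_right _ _).trans h, (dvd_mul_left _ _).trans h⟩, ?_⟩
  rintro ⟨⟨β, rfl⟩, h⟩
  have hstar : Prime (star π) := prime_of_norm_eq_prime hp (by rw [Zsqrtd.norm_conj, hπ])
  exact mul_dvd_mul_left _ ((hstar.dvd_or_dvd h).resolve_left (not_star_dvd hp hp2 hπ hre))

lemma dvd_norm_of_mem_normFiber {n : ℕ} (hα : α ∈ normFiber (p * n)) :
    (p : GaussianInt) ∣ (α.norm : GaussianInt) := by
  rw [mem_normFiber.1 hα, Nat.cast_mul, Int.cast_mul]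
  exact dvd_mul_right _ _

lemma heckeSum_two_mul (n : ℕ) : heckeSum (2 * n) = 0 :=
  sum_eq_zero fun α hα => heckeCharacter_of_even_norm (by
    rw [mem_normFiber.1 hα, Nat.cast_mul]
    exact even_two_mul _)

lemma heckeSum_inert_mul (hp : p.Prime) (h : p % 4 = 3) (n : ℕ) :
    heckeSum (p * n) = if p ∣ n then heckeSum (n / p) else 0 := by
  classical
  have := Fact.mk hp
  have hprime := GaussianInt.prime_of_nat_prime_of_mod_four_eq_three p h
  rw [← sum_normFiber_filter_natCast_dvd (by omega), heckeSum, filter_true_of_mem fun α hα => ?_]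
  refine (dvd_or_star_dvd hprime (dvd_norm_of_mem_normFiber hα)).elim id fun h => ?_
  rwa [star_natCast] at h

/-- Every element of norm `pn` is divisible by one of the two primes above `p`, and it is divisible
by both exactly when it is divisible by `p`. -/
lemma heckeSum_split_mul (hp : p.Prime) (h : p % 4 = 1) (n : ℕ) :
    heckeSum (p * n) = eulerTrace p * heckeSum n - if p ∣ n then heckeSum (n / p) else 0 := by
  classical
  have := Fact.mk hp
  obtain ⟨a, b, ha, hb, hab, hap⟩ := exists_frobeniusTrace_sq_eq h
  set π : GaussianInt := ⟨a, b⟩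
  have hπ : π.norm = p := by rw [norm_eq_re_sq_add_im_sq, hab]
  have hstar : (star π).norm = p := by rw [Zsqrtd.norm_conj, hπ]
  have hre : π.re ≠ 0 := fun h0 => by
    rw [show a = 0 from h0] at ha
    exact absurd ha (by decide)
  have htrace : heckeCharacter π + heckeCharacter (star π) = eulerTrace p := by
    rw [heckeCharacter_add_star ha hb, hπ, eulerTrace, if_pos h, hap, Int.cast_natCast]
  have hcover : (normFiber (p * n)).filter (fun α => π ∣ α ∨ star π ∣ α) = normFiber (p * n) :=
    filter_true_of_mem fun α hα => dvd_or_star_dvd (prime_of_norm_eq_prime hp hπ)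
      (((natCast_eq_mul_star hπ).symm ▸ dvd_mul_right _ _ : π ∣ (p : GaussianInt)).trans
        (dvd_norm_of_mem_normFiber hα))
  have hincl := sum_union_inter (s₁ := (normFiber (p * n)).filter (π ∣ ·))
    (s₂ := (normFiber (p * n)).filter (star π ∣ ·)) (f := heckeCharacter)
  rw [← filter_or, hcover, ← filter_and, sum_normFiber_filter_dvd hp.ne_zero hπ,
    sum_normFiber_filter_dvd hp.ne_zero hstar, ← add_mul, htrace,
    filter_congr fun α _ => (natCast_dvd_iff hp (by omega) hπ hre).symm,
    sum_normFiber_filter_natCast_dvd (by omega)] at hincl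
  exact eq_sub_of_add_eq hincl

lemma heckeSum_prime_mul (hp : p.Prime) (n : ℕ) :
    heckeSum (p * n) = eulerTrace p * heckeSum n
      - ((ZMod.χ₄ p : ℝ) : ℂ) * if p ∣ n then heckeSum (n / p) else 0 := by
  rcases hp.eq_two_or_odd with rfl | hodd
  · rw [heckeSum_two_mul, eulerTrace, if_neg (by decide),
      show ZMod.χ₄ ((2 : ℕ) : ZMod 4) = 0 by decide]
    push_cast
    ring
  rcases Nat.odd_mod_four_iff.1 hodd with h | h
  · rw [heckeSum_split_mul hp h, ZMod.χ₄_nat_one_mod_four h]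
    push_cast
    ring
  · rw [heckeSum_inert_mul hp h, ZMod.χ₄_nat_three_mod_four h, eulerTrace,
      if_neg (by omega : ¬ p % 4 = 1)]
    push_cast
    ring

lemma sum_divisors_heckeVonMangoldt_mul {n : ℕ} (hn : n ≠ 0) :
    ∑ k ∈ n.divisors, (heckeVonMangoldt k : ℂ) * heckeSum (n / k) = Real.log n * heckeSum n :=
  sum_divisors_logDerivCoeff_mul (fun _ m hp _ => heckeSum_prime_mul hp m) hn

end HeckeRelations

section LatticeTerm

open Complex

/-- The function `z ^ 2 * ‖z‖ ^ (-2 - 2 * s)` of `z`, which up to the sign `paritySign` is the term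
of the Hecke `L`-series belonging to the Gaussian integer `z`. -/
noncomputable def latticeTerm (s z : ℂ) : ℂ := z ^ 2 * ((‖z‖ ^ 2 : ℝ) : ℂ) ^ (-1 - s)

lemma differentiable_latticeTerm {z : ℂ} (hz : z ≠ 0) :
    Differentiable ℂ fun s => latticeTerm s z := by
  have hnorm : ((‖z‖ ^ 2 : ℝ) : ℂ) ≠ 0 := ofReal_ne_zero.2 (by positivity)
  exact fun s => (differentiableAt_const _).mul
    (((differentiableAt_const _).sub differentiableAt_id).const_cpow (Or.inl hnorm))

lemma hasDerivAt_latticeTerm (s : ℂ) {f : ℝ → ℂ} {f' : ℂ} {t : ℝ} (hf : HasDerivAt f f' t)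
    (hft : f t ≠ 0) :
    HasDerivAt (fun t => latticeTerm s (f t))
      (2 * f t * f' * ((‖f t‖ ^ 2 : ℝ) : ℂ) ^ (-1 - s) + f t ^ 2 *
        ((-1 - s) * ((‖f t‖ ^ 2 : ℝ) : ℂ) ^ (-1 - s - 1) * ((2 * inner ℝ (f t) f' : ℝ) : ℂ)))
      t := by
  have hslit : ((‖f t‖ ^ 2 : ℝ) : ℂ) ∈ slitPlane := ofReal_mem_slitPlane.2 (by positivity)
  have hcpow := (hasStrictDerivAt_cpow_const (c := -1 - s) hslit).hasDerivAt.comp t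
    hf.norm_sq.ofReal_comp
  refine ((hf.pow 2).mul hcpow).congr_deriv ?_
  norm_num

lemma norm_sq_cpow {z : ℂ} (hz : z ≠ 0) (w : ℂ) :
    ‖((‖z‖ ^ 2 : ℝ) : ℂ) ^ w‖ = ‖z‖ ^ (2 * w.re) := by
  rw [norm_cpow_eq_rpow_re_of_pos (by positivity), Real.rpow_mul (norm_nonneg z), Real.rpow_two]

lemma norm_deriv_latticeTerm_le (s u : ℂ) {z : ℂ} (hz : z ≠ 0) :
    ‖2 * z * u * ((‖z‖ ^ 2 : ℝ) : ℂ) ^ (-1 - s) + z ^ 2 *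
        ((-1 - s) * ((‖z‖ ^ 2 : ℝ) : ℂ) ^ (-1 - s - 1) * ((2 * inner ℝ z u : ℝ) : ℂ))‖
      ≤ 2 * ‖u‖ * (1 + ‖1 + s‖) * ‖z‖ ^ (-1 - 2 * s.re) := by
  have hpos : 0 < ‖z‖ := norm_pos_iff.2 hz
  have hinner : ‖((2 * inner ℝ z u : ℝ) : ℂ)‖ ≤ 2 * (‖z‖ * ‖u‖) := by
    rw [norm_real, norm_mul, Real.norm_ofNat]
    gcongr
    exact norm_inner_le_norm z u
  have hone : ‖((‖z‖ ^ 2 : ℝ) : ℂ) ^ (-1 - s)‖ * ‖z‖ = ‖z‖ ^ (-1 - 2 * s.re) := by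
    rw [norm_sq_cpow hz, ← Real.rpow_add_one hpos.ne', sub_re, neg_re, one_re]
    ring_nf
  have htwo : ‖((‖z‖ ^ 2 : ℝ) : ℂ) ^ (-1 - s - 1)‖ * ‖z‖ ^ 3 = ‖z‖ ^ (-1 - 2 * s.re) := by
    rw [norm_sq_cpow hz, ← Real.rpow_natCast ‖z‖ 3, ← Real.rpow_add hpos, sub_re, sub_re, neg_re,
      one_re]
    push_cast
    ring_nf
  have hneg : ‖-1 - s‖ = ‖1 + s‖ := by rw [← norm_neg, neg_sub', neg_neg, sub_neg_eq_add]
  calc _ ≤ 2 * ‖z‖ * ‖u‖ * ‖((‖z‖ ^ 2 : ℝ) : ℂ) ^ (-1 - s)‖ + ‖z‖ ^ 2 *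
        (‖1 + s‖ * ‖((‖z‖ ^ 2 : ℝ) : ℂ) ^ (-1 - s - 1)‖ * (2 * (‖z‖ * ‖u‖))) := by
        refine (norm_add_le _ _).trans ?_
        rw [norm_mul, norm_mul, norm_mul, norm_mul, norm_mul, norm_mul, norm_pow, hneg, norm_ofNat]
        gcongr
    _ = 2 * ‖u‖ * (‖((‖z‖ ^ 2 : ℝ) : ℂ) ^ (-1 - s)‖ * ‖z‖ + ‖1 + s‖ *
          (‖((‖z‖ ^ 2 : ℝ) : ℂ) ^ (-1 - s - 1)‖ * ‖z‖ ^ 3)) := by ring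
    _ = _ := by
        rw [hone, htwo]
        ring

lemma norm_latticeTerm_sub_le {s z u : ℂ} {m : ℝ} (hm : 0 < m) (hs : -1 / 2 ≤ s.re)
    (h : ∀ t : ℝ, 0 ≤ t → t ≤ 1 → m ≤ ‖z + t * u‖) :
    ‖latticeTerm s (z + u) - latticeTerm s z‖
      ≤ 2 * ‖u‖ * (1 + ‖1 + s‖) * m ^ (-1 - 2 * s.re) := by
  have hne (t : ℝ) (h0 : 0 ≤ t) (h1 : t ≤ 1) : z + t * u ≠ 0 :=
    norm_pos_iff.1 (hm.trans_le (h t h0 h1))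
  have hseg (t : ℝ) : HasDerivAt (fun t : ℝ => z + t * u) u t := by
    simpa only [id, ofReal_one, one_mul] using
      ((hasDerivAt_id t).ofReal_comp.mul_const u).const_add z
  have hbound := norm_image_sub_le_of_norm_deriv_le_segment_01'
    (f := fun t : ℝ => latticeTerm s (z + t * u))
    (C := 2 * ‖u‖ * (1 + ‖1 + s‖) * m ^ (-1 - 2 * s.re))
    (fun t ht => (hasDerivAt_latticeTerm s (hseg t) (hne t ht.1 ht.2)).hasDerivWithinAt)
    fun t ht => (norm_deriv_latticeTerm_le s u (hne t ht.1 ht.2.le)).trans (by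
      gcongr 2 * ‖u‖ * (1 + ‖1 + s‖) * ?_
      exact Real.rpow_le_rpow_of_nonpos hm (h t ht.1 ht.2.le) (by linarith))
  simpa only [ofReal_one, one_mul, ofReal_zero, zero_mul, add_zero] using hbound

end LatticeTerm

section LatticeSeries

open Complex

/-- The complex number `2 * (a + b * I) + 1`; these are the Gaussian integers congruent to `1`
modulo `2`. -/
def oddPoint (v : ℤ × ℤ) : ℂ := 2 * (v.1 + v.2 * I) + 1

/-- The difference of the terms at a point congruent to `1` and at a neighbour congruent to `I`
modulo `2`. These pairs exhaust the Hecke `L`-series, and summing over pairs makes it converge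
beyond the half-plane `1 < re s`. -/
noncomputable def latticeDiff (v : ℤ × ℤ) (s : ℂ) : ℂ :=
  latticeTerm s (oddPoint v) - latticeTerm s (oddPoint v + (1 + I))

lemma summable_norm_rpow_neg {k : ℝ} (hk : 2 < k) : Summable fun v : ℤ × ℤ => ‖v‖ ^ (-k) := by
  have h := EisensteinSeries.summable_one_div_norm_rpow hk
  rw [← (finTwoArrowEquiv _).symm.summable_iff] at h
  refine h.congr fun v => ?_
  simp only [Function.comp_apply, finTwoArrowEquiv_symm_apply, Prod.norm_def,
    EisensteinSeries.norm_eq_max_natAbs, Matrix.cons_val_zero, Matrix.cons_val_one, Int.norm_eq_abs,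
    Nat.cast_max, Nat.cast_natAbs, Int.cast_abs]

lemma summable_one_add_norm_rpow_neg {k : ℝ} (hk : 2 < k) :
    Summable fun v : ℤ × ℤ => (1 + ‖v‖) ^ (-k) := by
  refine (summable_norm_rpow_neg hk).of_norm_bounded_eventually ?_
  filter_upwards [(Set.finite_singleton (0 : ℤ × ℤ)).compl_mem_cofinite] with v hv
  rw [Real.norm_of_nonneg (by positivity)]
  exact Real.rpow_le_rpow_of_nonpos (norm_pos_iff.2 hv) (by linarith) (by linarith)

lemma one_add_norm_div_le_norm_oddPoint_add (v : ℤ × ℤ) {t : ℝ} (h0 : 0 ≤ t) (h1 : t ≤ 1) :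
    (1 + ‖v‖) / 5 ≤ ‖oddPoint v + t * (1 + I)‖ := by
  set w := oddPoint v + t * (1 + I) with hw
  have hre : w.re = 2 * v.1 + 1 + t := by simp [hw, oddPoint]
  have him : w.im = 2 * v.2 + t := by simp [hw, oddPoint]
  have hwre : |2 * (v.1 : ℝ) + 1 + t| ≤ ‖w‖ := hre ▸ abs_re_le_norm w
  have hwim : |2 * (v.2 : ℝ) + t| ≤ ‖w‖ := him ▸ abs_im_le_norm w
  have hhalf : 1 ≤ 2 * ‖w‖ := by
    have hodd : (1 : ℝ) ≤ |2 * (v.1 : ℝ) + 1 - 2 * v.2| := by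
      exact_mod_cast Int.one_le_abs (by omega : 2 * v.1 + 1 - 2 * v.2 ≠ 0)
    have htri := abs_sub (2 * (v.1 : ℝ) + 1 + t) (2 * v.2 + t)
    rw [add_sub_add_right_eq_sub] at htri
    linarith
  have hfst : 2 * |(v.1 : ℝ)| - 2 ≤ ‖w‖ := by
    rcases abs_cases (v.1 : ℝ) with h | h <;> linarith [abs_le.1 hwre]
  have hsnd : 2 * |(v.2 : ℝ)| - 2 ≤ ‖w‖ := by
    rcases abs_cases (v.2 : ℝ) with h | h <;> linarith [abs_le.1 hwim]
  have hnorm : 2 * ‖v‖ - 2 ≤ ‖w‖ := by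
    rw [Prod.norm_def, Int.norm_eq_abs, Int.norm_eq_abs]
    rcases max_choice |(v.1 : ℝ)| |(v.2 : ℝ)| with h | h <;> rwa [h]
  linarith

lemma norm_latticeDiff_le (v : ℤ × ℤ) {s : ℂ} (hs : -1 / 2 ≤ s.re) :
    ‖latticeDiff v s‖ ≤ 4 * (1 + ‖1 + s‖) * ((1 + ‖v‖) / 5) ^ (-1 - 2 * s.re) := by
  rw [latticeDiff, norm_sub_rev]
  refine (norm_latticeTerm_sub_le (by positivity) hs
    fun t => one_add_norm_div_le_norm_oddPoint_add v).trans ?_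
  have hu : ‖1 + I‖ ≤ 2 := (norm_add_le _ _).trans_eq (by rw [norm_one, norm_I]; norm_num)
  gcongr
  linarith

lemma norm_latticeDiff_le_of_mem (v : ℤ × ℤ) {s : ℂ} {σ R : ℝ} (hσ : -1 / 2 ≤ σ) (hs : σ ≤ s.re)
    (hR : ‖s‖ ≤ R) :
    ‖latticeDiff v s‖ ≤ 4 * (2 + R) * 5 ^ (1 + 2 * R) * (1 + ‖v‖) ^ (-(1 + 2 * σ)) := by
  have hre : s.re ≤ R := (re_le_norm s).trans hR
  have hone : 1 + ‖1 + s‖ ≤ 2 + R := by linarith [norm_add_le 1 s, norm_one (α := ℂ)]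
  have hscale : ((1 + ‖v‖) / 5) ^ (-1 - 2 * s.re)
      = 5 ^ (1 + 2 * s.re) * (1 + ‖v‖) ^ (-(1 + 2 * s.re)) := by
    rw [Real.div_rpow (by positivity) (by norm_num), show -1 - 2 * s.re = -(1 + 2 * s.re) by ring,
      Real.rpow_neg (by norm_num : (0 : ℝ) ≤ 5), div_inv_eq_mul, mul_comm]
  have hv := norm_nonneg v
  have hR0 : 0 ≤ R := (norm_nonneg s).trans hR
  refine (norm_latticeDiff_le v (hσ.trans hs)).trans ?_
  rw [hscale, ← mul_assoc]
  gcongr <;> linarith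

lemma oddPoint_add_ne_zero (v : ℤ × ℤ) {t : ℝ} (h0 : 0 ≤ t) (h1 : t ≤ 1) :
    oddPoint v + t * (1 + I) ≠ 0 :=
  norm_pos_iff.1 ((by positivity : 0 < (1 + ‖v‖) / 5).trans_le
    (one_add_norm_div_le_norm_oddPoint_add v h0 h1))

lemma differentiable_latticeDiff (v : ℤ × ℤ) : Differentiable ℂ (latticeDiff v) := by
  have h0 := oddPoint_add_ne_zero v le_rfl zero_le_one
  have h1 := oddPoint_add_ne_zero v zero_le_one le_rfl
  rw [ofReal_zero, zero_mul, add_zero] at h0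
  rw [ofReal_one, one_mul] at h1
  exact (differentiable_latticeTerm h0).sub (differentiable_latticeTerm h1)

lemma summable_latticeDiff {s : ℂ} (hs : 1 / 2 < s.re) : Summable fun v => latticeDiff v s :=
  .of_norm_bounded ((summable_one_add_norm_rpow_neg (by linarith)).mul_left _) fun v =>
    norm_latticeDiff_le_of_mem v (by linarith) le_rfl le_rfl

/-- The continuation of four times the Hecke `L`-function to the half-plane `1 / 2 < re s`. -/
noncomputable def latticeSeries (s : ℂ) : ℂ := ∑' v : ℤ × ℤ, latticeDiff v s

lemma differentiableOn_latticeSeries : DifferentiableOn ℂ latticeSeries {s | 1 / 2 < s.re} := by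
  intro s hs
  obtain ⟨σ, hσ, hσs⟩ := exists_between (show 1 / 2 < s.re from hs)
  let U : Set ℂ := {z | σ < z.re} ∩ Metric.ball 0 (‖s‖ + 1)
  have hU : IsOpen U := (isOpen_lt continuous_const continuous_re).inter Metric.isOpen_ball
  have hsU : s ∈ U := ⟨hσs, by rw [mem_ball_zero_iff]; linarith⟩
  have hdiff : DifferentiableOn ℂ latticeSeries U := differentiableOn_tsum_of_summable_norm
    ((summable_one_add_norm_rpow_neg (by linarith : 2 < 1 + 2 * σ)).mul_left _)
    (fun v => (differentiable_latticeDiff v).differentiableOn) hU fun v z hz =>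
      norm_latticeDiff_le_of_mem v (by linarith) hz.1.le (mem_ball_zero_iff.1 hz.2).le
  exact (hdiff.differentiableAt (hU.mem_nhds hsU)).differentiableWithinAt

end LatticeSeries

section HeckeSeries

open Complex

/-- The term of the Hecke `L`-series at `s` belonging to the Gaussian integer `α`. -/
noncomputable def heckeTerm (s : ℂ) (α : GaussianInt) : ℂ := paritySign α * latticeTerm s α

lemma norm_latticeTerm {z : ℂ} (hz : z ≠ 0) (s : ℂ) : ‖latticeTerm s z‖ = ‖z‖ ^ (-(2 * s.re)) := by
  rw [latticeTerm, norm_mul, norm_sq_cpow hz, norm_pow, ← Real.rpow_natCast,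
    ← Real.rpow_add (norm_pos_iff.2 hz), sub_re, neg_re, one_re]
  push_cast
  ring_nf

lemma norm_paritySign_le (α : GaussianInt) : ‖(paritySign α : ℂ)‖ ≤ 1 := by
  unfold paritySign
  split_ifs <;> simp

lemma max_abs_le_norm_toComplex (α : GaussianInt) : ‖(α.re, α.im)‖ ≤ ‖(α : ℂ)‖ := by
  rw [Prod.norm_def, Int.norm_eq_abs, Int.norm_eq_abs, GaussianInt.intCast_re,
    GaussianInt.intCast_im]
  exact max_le (abs_re_le_norm _) (abs_im_le_norm _)

lemma summable_heckeTerm {s : ℂ} (hs : 1 < s.re) : Summable (heckeTerm s) := by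
  let e : GaussianInt ≃ ℤ × ℤ :=
    ⟨fun α => (α.re, α.im), fun v => ⟨v.1, v.2⟩, fun _ => rfl, fun _ => rfl⟩
  refine .of_norm_bounded ((e.summable_iff).2
    (summable_norm_rpow_neg (by linarith : 2 < 2 * s.re))) fun α => ?_
  rcases eq_or_ne α 0 with rfl | hα
  · rw [heckeTerm, paritySign_zero, Int.cast_zero, zero_mul, norm_zero]
    exact Real.rpow_nonneg (norm_nonneg _) _
  have hpos : 0 < ‖e α‖ := norm_pos_iff.2 fun h => hα (e.injective h)
  calc ‖heckeTerm s α‖ ≤ 1 * ‖(α : ℂ)‖ ^ (-(2 * s.re)) := by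
        rw [heckeTerm, norm_mul, norm_latticeTerm (mt GaussianInt.toComplex_eq_zero.1 hα)]
        gcongr
        exact norm_paritySign_le α
    _ ≤ ‖e α‖ ^ (-(2 * s.re)) := by
        rw [one_mul]
        exact Real.rpow_le_rpow_of_nonpos hpos (max_abs_le_norm_toComplex α) (by linarith)

lemma heckeTerm_eq {α : GaussianInt} (hα : α ≠ 0) (s : ℂ) :
    heckeTerm s α = heckeCharacter α / (α.norm : ℂ) ^ s := by
  have hnorm : (α.norm : ℂ) ≠ 0 := Int.cast_ne_zero.2 (mt GaussianInt.norm_eq_zero.1 hα)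
  have hsq : ((‖(α : ℂ)‖ ^ 2 : ℝ) : ℂ) = α.norm := by
    rw [← normSq_eq_norm_sq, ← GaussianInt.intCast_real_norm, ofReal_intCast]
  rw [heckeTerm, latticeTerm, hsq, heckeCharacter, cpow_sub _ _ hnorm, cpow_neg_one]
  field_simp

lemma hasSum_heckeTerm_fiber (s : ℂ) (n : ℕ) :
    HasSum (fun α : {α : GaussianInt // α.norm.natAbs = n} => heckeTerm s α)
      (LSeries.term heckeSum s n) := by
  have hmem (α : GaussianInt) : α.norm.natAbs = n ↔ α ∈ normFiber n := by
    rw [mem_normFiber, ← Int.natCast_inj, Int.natAbs_of_nonneg (GaussianInt.norm_nonneg α)]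
  have hsum : ∑ α ∈ normFiber n, heckeTerm s α = LSeries.term heckeSum s n := by
    rcases eq_or_ne n 0 with rfl | hn
    · rw [LSeries.term_zero]
      refine Finset.sum_eq_zero fun α hα => ?_
      rw [GaussianInt.norm_eq_zero.1 (mem_normFiber.1 hα), heckeTerm, paritySign_zero,
        Int.cast_zero, zero_mul]
    · rw [LSeries.term_of_ne_zero hn, heckeSum, Finset.sum_div]
      refine Finset.sum_congr rfl fun α hα => ?_
      have hα0 : α ≠ 0 := by
        rintro rfl
        rw [mem_normFiber, Zsqrtd.norm_zero] at hα
        exact hn (by exact_mod_cast hα.symm)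
      rw [heckeTerm_eq hα0, mem_normFiber.1 hα, Int.cast_natCast]
  rw [← hsum]
  exact (Equiv.subtypeEquivRight hmem).hasSum_iff.2 ((normFiber n).hasSum (heckeTerm s))

lemma hasSum_LSeries_term_heckeSum {s : ℂ} (hs : 1 < s.re) :
    HasSum (LSeries.term heckeSum s) (∑' α, heckeTerm s α) :=
  ((Equiv.sigmaFiberEquiv fun α : GaussianInt => α.norm.natAbs).hasSum_iff.2
    (summable_heckeTerm hs).hasSum).sigma fun n => hasSum_heckeTerm_fiber s n

lemma lseriesSummable_heckeSum {s : ℂ} (hs : 1 < s.re) : LSeriesSummable heckeSum s :=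
  (hasSum_LSeries_term_heckeSum hs).summable

lemma lseries_heckeSum {s : ℂ} (hs : 1 < s.re) : LSeries heckeSum s = ∑' α, heckeTerm s α :=
  (hasSum_LSeries_term_heckeSum hs).tsum_eq

/-- The enumeration of the Gaussian integers of odd norm underlying `latticeDiff`. -/
def oddElement : (ℤ × ℤ) ⊕ (ℤ × ℤ) → GaussianInt :=
  Sum.elim (fun v => ⟨2 * v.1 + 1, 2 * v.2⟩) fun v => ⟨2 * v.1 + 2, 2 * v.2 + 1⟩

lemma oddElement_injective : Function.Injective oddElement := by
  rintro (⟨a, b⟩ | ⟨a, b⟩) (⟨c, d⟩ | ⟨c, d⟩) h <;>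
    simp only [oddElement, Sum.elim_inl, Sum.elim_inr, Zsqrtd.ext_iff] at h <;>
    simp only [Sum.inl.injEq, Sum.inr.injEq, Prod.mk.injEq, reduceCtorEq] <;> omega

lemma paritySign_eq_zero_of_notMem_range {α : GaussianInt} (h : α ∉ Set.range oddElement) :
    paritySign α = 0 := by
  have hodd : ¬ (α.re % 2 = 1 ∧ α.im % 2 = 0) := fun hα => h ⟨.inl (α.re / 2, α.im / 2), by
    ext <;> simp only [oddElement, Sum.elim_inl] <;> omega⟩
  have heven : ¬ (α.re % 2 = 0 ∧ α.im % 2 = 1) := fun hα => h ⟨.inr (α.re / 2 - 1, α.im / 2), by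
    ext <;> simp only [oddElement, Sum.elim_inr] <;> omega⟩
  rw [paritySign, if_neg hodd, if_neg heven]

lemma heckeTerm_oddElement_inl (s : ℂ) (v : ℤ × ℤ) :
    heckeTerm s (oddElement (.inl v)) = latticeTerm s (oddPoint v) := by
  have hpoint : (oddElement (.inl v) : ℂ) = oddPoint v := by
    simp only [oddElement, Sum.elim_inl, GaussianInt.toComplex_def, oddPoint]
    push_cast
    ring
  rw [heckeTerm, hpoint, paritySign_eq_one (by simp only [oddElement, Sum.elim_inl]; omega)
    (by simp only [oddElement, Sum.elim_inl]; omega), Int.cast_one, one_mul]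

lemma heckeTerm_oddElement_inr (s : ℂ) (v : ℤ × ℤ) :
    heckeTerm s (oddElement (.inr v)) = -latticeTerm s (oddPoint v + (1 + I)) := by
  have hpoint : (oddElement (.inr v) : ℂ) = oddPoint v + (1 + I) := by
    simp only [oddElement, Sum.elim_inr, GaussianInt.toComplex_def, oddPoint]
    push_cast
    ring
  have hsign : paritySign (oddElement (.inr v)) = -1 := by
    rw [paritySign, if_neg (by simp only [oddElement, Sum.elim_inr]; omega),
      if_pos (by simp only [oddElement, Sum.elim_inr]; omega)]
  rw [heckeTerm, hpoint, hsign, Int.cast_neg, Int.cast_one, neg_one_mul]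

theorem latticeSeries_eq_lseries {s : ℂ} (hs : 1 < s.re) :
    latticeSeries s = LSeries heckeSum s := by
  have hsum := (summable_heckeTerm hs).comp_injective oddElement_injective
  have hsupport : Function.support (heckeTerm s) ⊆ Set.range oddElement := fun α hα => by
    by_contra hmem
    exact hα (by rw [heckeTerm, paritySign_eq_zero_of_notMem_range hmem, Int.cast_zero, zero_mul])
  have hinl := hsum.comp_injective Sum.inl_injective
  have hinr := hsum.comp_injective Sum.inr_injective
  rw [lseries_heckeSum hs, ← oddElement_injective.tsum_eq hsupport]
  refine Eq.trans ?_ (Summable.tsum_sum hinl hinr).symm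
  refine Eq.trans ?_ (hinl.tsum_add hinr)
  refine tsum_congr fun v => ?_
  simp only [Function.comp_apply, heckeTerm_oddElement_inl, heckeTerm_oddElement_inr, latticeDiff,
    sub_eq_add_neg]

end HeckeSeries

section LatticeSeriesAtOne

open Complex
open scoped ComplexConjugate

/-- The Eisenstein series `∑ 1 / (z + n) ^ 2 = (π / sin (π z)) ^ 2`, which appears as a row of the
lattice sum `latticeSeries 1`. -/
noncomputable def inverseSquareSum (z : ℂ) : ℂ := ∑' n : ℤ, 1 / (z + n) ^ 2

lemma summable_one_div_add_int_sq (z : ℂ) : Summable fun n : ℤ => 1 / (z + n) ^ 2 := by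
  refine (EisensteinSeries.linear_right_summable z 1 le_rfl).congr fun n => ?_
  rw [Int.cast_one, one_mul, one_div, ← Nat.cast_ofNat, zpow_natCast]

lemma inverseSquareSum_of_im_pos {z : ℂ} (hz : 0 < z.im) :
    inverseSquareSum z = -(4 * Real.pi ^ 2) *
      (cexp (2 * Real.pi * I * z) / (1 - cexp (2 * Real.pi * I * z)) ^ 2) := by
  have hq : ‖cexp (2 * Real.pi * I * z)‖ < 1 := UpperHalfPlane.norm_exp_two_pi_I_lt_one ⟨z, hz⟩
  have h := EisensteinSeries.qExpansion_identity (k := 1) le_rfl ⟨z, hz⟩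
  simp only [pow_one, one_add_one_eq_two, Nat.factorial_one, Nat.cast_one, div_one] at h
  rw [inverseSquareSum, ← tsum_coe_mul_geometric_of_norm_lt_one hq]
  refine h.trans ?_
  congr 1
  rw [mul_pow, mul_pow, I_sq]
  ring

lemma re_inverseSquareSum_conj (z : ℂ) :
    (inverseSquareSum (conj z)).re = (inverseSquareSum z).re := by
  rw [← conj_re (inverseSquareSum z), inverseSquareSum, inverseSquareSum, conj_tsum]
  simp only [map_div₀, map_one, map_pow, map_add, map_intCast]

lemma re_inverseSquareSum_mul_I_abs (x y : ℝ) :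
    (inverseSquareSum (x + |y| * I)).re = (inverseSquareSum (x + y * I)).re := by
  rcases abs_choice y with h | h <;> rw [h]
  rw [← re_inverseSquareSum_conj]
  simp only [map_add, map_mul, map_neg, conj_ofReal, conj_I, ofReal_neg, neg_mul_neg]

lemma re_inverseSquareSum_mul_I_neg {y : ℝ} (hy : y ≠ 0) :
    (inverseSquareSum (y * I)).re < 0 := by
  have hpos : 0 < |y| := abs_pos.2 hy
  have hexp : cexp (2 * Real.pi * I * (|y| * I)) = (Real.exp (-(2 * Real.pi * |y|)) : ℝ) := by
    rw [ofReal_exp]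
    congr 1
    push_cast
    linear_combination 2 * Real.pi * (|y| : ℝ) * I_sq
  have hlt : Real.exp (-(2 * Real.pi * |y|)) < 1 := by
    rw [Real.exp_lt_one_iff, neg_lt_zero]
    positivity
  have habs := re_inverseSquareSum_mul_I_abs 0 y
  rw [ofReal_zero, zero_add, zero_add] at habs
  rw [← habs, inverseSquareSum_of_im_pos (by simpa using hpos), hexp]
  norm_cast
  rw [neg_mul, neg_lt_zero]
  have := sub_pos.2 hlt
  positivity

lemma re_inverseSquareSum_half_pos : 0 < (inverseSquareSum (1 / 2)).re := by
  have hterm (n : ℤ) : (1 / (1 / 2 + (n : ℂ)) ^ 2).re = 1 / (1 / 2 + (n : ℝ)) ^ 2 := by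
    rw [← ofReal_re (1 / (1 / 2 + (n : ℝ)) ^ 2)]
    push_cast
    rfl
  have hsum := summable_one_div_add_int_sq (1 / 2)
  rw [inverseSquareSum, re_tsum hsum]
  refine (hasSum_re hsum.hasSum).summable.tsum_pos (fun n => ?_) 0 ?_
  · rw [hterm]
    positivity
  · rw [hterm]
    norm_num

lemma re_inverseSquareSum_half_add_mul_I_pos (y : ℝ) :
    0 < (inverseSquareSum (1 / 2 + y * I)).re := by
  rcases eq_or_ne y 0 with rfl | hy
  · rw [ofReal_zero, zero_mul, add_zero]
    exact re_inverseSquareSum_half_pos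
  have hpos : 0 < |y| := abs_pos.2 hy
  have hexp : cexp (2 * Real.pi * I * (1 / 2 + |y| * I))
      = (-Real.exp (-(2 * Real.pi * |y|)) : ℝ) := by
    rw [show 2 * Real.pi * I * (1 / 2 + |y| * I) = Real.pi * I + (-(2 * Real.pi * |y|) : ℝ) by
      push_cast
      linear_combination 2 * Real.pi * (|y| : ℝ) * I_sq, Complex.exp_add, exp_pi_mul_I,
      ← ofReal_exp]
    push_cast
    ring
  have habs := re_inverseSquareSum_mul_I_abs (1 / 2) y
  rw [ofReal_div, ofReal_one, ofReal_ofNat] at habs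
  rw [← habs, inverseSquareSum_of_im_pos (by simpa using hpos), hexp]
  norm_cast
  rw [sub_neg_eq_add, neg_div, neg_mul_neg]
  positivity

lemma latticeTerm_one (z : ℂ) : latticeTerm 1 z = 1 / conj z ^ 2 := by
  rcases eq_or_ne z 0 with rfl | hz
  · simp [latticeTerm]
  have hconj : conj z ≠ 0 := (map_ne_zero _).2 hz
  rw [latticeTerm, show (-1 - 1 : ℂ) = -(2 : ℕ) by norm_num, cpow_neg, cpow_natCast, ofReal_pow,
    ← mul_conj']
  field_simp

lemma latticeDiff_one (a b : ℤ) :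
    latticeDiff (a, b) 1 = 1 / 4 * (1 / (1 / 2 + (-b : ℝ) * I + a) ^ 2)
      - 1 / 4 * (1 / ((-(b + 1 / 2) : ℝ) * I + (a + 1 : ℤ)) ^ 2) := by
  have hodd : conj (oddPoint (a, b)) = 2 * (1 / 2 + (-b : ℝ) * I + a) := by
    simp only [oddPoint, map_add, map_mul, map_ofNat, map_intCast, conj_I, map_one]
    push_cast
    ring
  have heven : conj (oddPoint (a, b) + (1 + I)) = 2 * ((-(b + 1 / 2) : ℝ) * I + (a + 1 : ℤ)) := by
    rw [map_add, hodd, map_add, map_one, conj_I]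
    push_cast
    ring
  rw [latticeDiff, latticeTerm_one, latticeTerm_one, hodd, heven, mul_pow, mul_pow,
    one_div_mul_one_div, one_div_mul_one_div]
  norm_num

lemma tsum_latticeDiff_one (b : ℤ) :
    ∑' a : ℤ, latticeDiff (a, b) 1 = 1 / 4 * inverseSquareSum (1 / 2 + (-b : ℝ) * I)
      - 1 / 4 * inverseSquareSum ((-(b + 1 / 2) : ℝ) * I) := by
  have hodd := summable_one_div_add_int_sq (1 / 2 + (-b : ℝ) * I)
  have heven := (Equiv.addRight (1 : ℤ)).summable_iff.2
    (summable_one_div_add_int_sq ((-(b + 1 / 2) : ℝ) * I))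
  rw [inverseSquareSum, inverseSquareSum, ← tsum_mul_left, ← tsum_mul_left,
    ← (Equiv.addRight (1 : ℤ)).tsum_eq fun n : ℤ => 1 / 4 * (1 / ((-(b + 1 / 2) : ℝ) * I + n) ^ 2)]
  exact (tsum_congr fun a => latticeDiff_one a b).trans
    ((hodd.mul_left _).tsum_sub (heven.mul_left _))

lemma re_tsum_latticeDiff_one_pos (b : ℤ) : 0 < (∑' a : ℤ, latticeDiff (a, b) 1).re := by
  have hne : (-(b + 1 / 2) : ℝ) ≠ 0 := fun h => by
    have : (2 * b + 1 : ℝ) = 0 := by linarith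
    have : 2 * b + 1 = 0 := by exact_mod_cast this
    omega
  have hquarter (z : ℂ) : (1 / 4 * z).re = 1 / 4 * z.re := by
    rw [← re_ofReal_mul]
    push_cast
    rfl
  rw [tsum_latticeDiff_one, sub_re, hquarter, hquarter]
  linarith [re_inverseSquareSum_half_add_mul_I_pos (-b), re_inverseSquareSum_mul_I_neg hne]

theorem latticeSeries_one_ne_zero : latticeSeries 1 ≠ 0 := by
  have hswap : Summable fun v : ℤ × ℤ => latticeDiff v.swap 1 :=
    (Equiv.prodComm ℤ ℤ).summable_iff.2 (summable_latticeDiff (by norm_num))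
  have hrows : latticeSeries 1 = ∑' b : ℤ, ∑' a : ℤ, latticeDiff (a, b) 1 := by
    rw [latticeSeries, ← (Equiv.prodComm ℤ ℤ).tsum_eq]
    exact hswap.tsum_prod
  have hsum : Summable fun b : ℤ => ∑' a : ℤ, latticeDiff (a, b) 1 := hswap.prod
  have hpos : 0 < (latticeSeries 1).re := by
    rw [hrows, re_tsum hsum]
    exact (hasSum_re hsum.hasSum).summable.tsum_pos
      (fun b => (re_tsum_latticeDiff_one_pos b).le) 0 (re_tsum_latticeDiff_one_pos 0)
  exact fun h => hpos.ne' (by rw [h, zero_re])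

end LatticeSeriesAtOne

section LogDeriv

open scoped Topology

lemma tendsto_sub_mul_logDeriv {𝕜 : Type*} [NontriviallyNormedField 𝕜] [CompleteSpace 𝕜]
    {f : 𝕜 → 𝕜} {z₀ : 𝕜} (hf : AnalyticAt 𝕜 f z₀) (hord : analyticOrderAt f z₀ ≠ ⊤) :
    Tendsto (fun z => (z - z₀) * logDeriv f z) (𝓝[≠] z₀) (𝓝 (analyticOrderNatAt f z₀)) := by
  obtain ⟨g, hg, hg₀, hfg⟩ := hf.analyticOrderAt_ne_top.1 hord
  set m := analyticOrderNatAt f z₀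
  have hsub : Tendsto (fun z => z - z₀) (𝓝 z₀) (𝓝 0) := tendsto_sub_nhds_zero_iff.2 tendsto_id
  have hlim : Tendsto (fun z => m + (z - z₀) * logDeriv g z) (𝓝[≠] z₀) (𝓝 m) := by
    have h := (hsub.mul (hg.deriv.continuousAt.div hg.continuousAt hg₀).tendsto).const_add (m : 𝕜)
    rw [zero_mul, add_zero] at h
    exact h.mono_left nhdsWithin_le_nhds
  refine hlim.congr' ?_
  filter_upwards [nhdsWithin_le_nhds (logDeriv_congr_nhds hfg),
    nhdsWithin_le_nhds hg.eventually_analyticAt,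
    nhdsWithin_le_nhds (hg.continuousAt.eventually_ne hg₀), self_mem_nhdsWithin]
    with z hlog hana hgz hz
  have hz : z - z₀ ≠ 0 := sub_ne_zero.2 hz
  have hdiff : DifferentiableAt 𝕜 (fun w => w - z₀) z := by fun_prop
  have hpow : logDeriv (fun w => (w - z₀) ^ m) z = m / (z - z₀) := by
    rw [logDeriv_fun_pow hdiff, logDeriv_apply, deriv_sub_const, deriv_id'', mul_one_div]
  simp only [smul_eq_mul] at hlog
  rw [hlog, logDeriv_mul (f := fun w => (w - z₀) ^ m) z (pow_ne_zero m hz) hgz (by fun_prop)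
    hana.differentiableAt, hpow, mul_add, mul_div_cancel₀ _ hz]

end LogDeriv

section ThreeFour

open Complex

lemma lseriesSummable_of_abs_le {a b : ℕ → ℝ} {K : ℝ} (h : ∀ n, |b n| ≤ K * a n) {s : ℂ}
    (ha : LSeriesSummable (fun n => (a n : ℂ)) s) : LSeriesSummable (fun n => (b n : ℂ)) s := by
  refine Summable.of_norm_bounded (ha.smul (K : ℂ)).norm fun n => LSeries.norm_term_le s ?_
  rw [Pi.smul_apply, smul_eq_mul, ← ofReal_mul, norm_real, norm_real, Real.norm_eq_abs]
  exact (h n).trans (le_abs_self _)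

lemma re_term_ofReal_add_mul_I (f : ℕ → ℝ) (σ t : ℝ) {n : ℕ} (hn : n ≠ 0) :
    (LSeries.term (fun n => (f n : ℂ)) (σ + t * I) n).re
      = f n / (n : ℝ) ^ σ * Real.cos (t * Real.log n) := by
  have hcpow : (n : ℂ) ^ (σ + t * I) = ((n : ℝ) ^ σ : ℝ) * cexp ((t * Real.log n : ℝ) * I) := by
    have hn' : (n : ℂ) ≠ 0 := Nat.cast_ne_zero.2 hn
    rw [cpow_add _ _ hn', ofReal_cpow n.cast_nonneg, ofReal_natCast,
      cpow_def_of_ne_zero hn' (t * I), ← natCast_log, ofReal_mul]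
    congr 2
    ring
  rw [LSeries.term_of_ne_zero hn, hcpow, ← div_div, ← ofReal_div, div_eq_mul_inv, ← Complex.exp_neg,
    ← neg_mul, ← ofReal_neg, re_ofReal_mul, exp_ofReal_mul_I_re, Real.cos_neg]

/-- The de la Vallée Poussin inequality: with `c = cos (t log n)`, each term is bounded below by
`2 * a n * (1 - |c|) ^ 2 / n ^ σ`. -/
lemma re_lseries_combination_nonneg {a b : ℕ → ℝ} (h : ∀ n, |b n| ≤ 2 * a n) {σ : ℝ}
    (ha : LSeriesSummable (fun n => (a n : ℂ)) σ) (t : ℝ) :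
    0 ≤ 3 * (LSeries (fun n => (a n : ℂ)) σ).re
      + 2 * (LSeries (fun n => (b n : ℂ)) (σ + t * I)).re
      + (LSeries (fun n => (a n : ℂ)) (σ + (2 * t : ℝ) * I)).re := by
  have hsum (t : ℝ) : LSeriesSummable (fun n => (a n : ℂ)) (σ + t * I) :=
    ha.of_re_le_re (by rw [add_re, re_ofReal_mul, I_re, mul_zero, add_zero])
  refine (((hasSum_re ha.hasSum).mul_left 3).add
    ((hasSum_re (lseriesSummable_of_abs_le h (hsum t)).hasSum).mul_left 2)).add
    (hasSum_re (hsum (2 * t)).hasSum) |>.nonneg fun n => ?_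
  rcases eq_or_ne n 0 with rfl | hn
  · simp only [LSeries.term_zero, zero_re, mul_zero, add_zero, le_refl]
  have hzero := re_term_ofReal_add_mul_I a σ 0 hn
  rw [ofReal_zero, zero_mul, add_zero, zero_mul, Real.cos_zero, mul_one] at hzero
  rw [hzero, re_term_ofReal_add_mul_I _ _ _ hn, re_term_ofReal_add_mul_I _ _ _ hn, mul_assoc,
    Real.cos_two_mul]
  set c := Real.cos (t * Real.log n)
  have hbc : -(2 * a n * |c|) ≤ b n * c := by
    refine (neg_le_neg ?_).trans (neg_abs_le (b n * c))
    rw [abs_mul]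
    exact mul_le_mul_of_nonneg_right (h n) (abs_nonneg c)
  have ha : 0 ≤ a n := by linarith [abs_nonneg (b n), h n]
  have hkey : 0 ≤ 3 * a n + 2 * (b n * c) + a n * (2 * c ^ 2 - 1) := by
    rw [← sq_abs c]
    nlinarith [mul_nonneg ha (sq_nonneg (1 - |c|))]
  calc 0 ≤ (3 * a n + 2 * (b n * c) + a n * (2 * c ^ 2 - 1)) / (n : ℝ) ^ σ := by positivity
    _ = _ := by ring

end ThreeFour

section ResidueClassSeries

open Complex ArithmeticFunction.vonMangoldt
open scoped Topology

lemma lseriesSummable_residueClass {q : ℕ} (a : ZMod q) {s : ℂ} (hs : 1 < s.re) :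
    LSeriesSummable (fun n => (residueClass a n : ℂ)) s :=
  LSeriesSummable_of_abscissaOfAbsConv_lt_re
    ((abscissaOfAbsConv_residueClass_le_one a).trans_lt (by exact_mod_cast hs))

variable {q : ℕ} [NeZero q] {a : ZMod q}

lemma lseries_residueClass_eq_aux_add (ha : IsUnit a) {s : ℂ} (hs : 1 < s.re) :
    LSeries (fun n => (residueClass a n : ℂ)) s
      = LFunctionResidueClassAux a s + (q.totient : ℂ)⁻¹ / (s - 1) := by
  rw [eqOn_LFunctionResidueClassAux ha hs, sub_add_cancel]

lemma tendsto_sub_mul_LFunctionResidueClassAux (a : ZMod q) {s : ℂ} (hs : 1 ≤ s.re) :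
    Tendsto (fun z => (z - s) * LFunctionResidueClassAux a z) (𝓝[{z | 1 < z.re}] s) (𝓝 0) := by
  have hsub : Tendsto (fun z => z - s) (𝓝[{z | 1 < z.re}] s) (𝓝 0) :=
    tendsto_sub_nhds_zero_iff.2 (tendsto_id'.2 nhdsWithin_le_nhds)
  have hcont := (continuousOn_LFunctionResidueClassAux a s hs).mono
    fun z (hz : 1 < z.re) => hz.le
  simpa only [zero_mul] using hsub.mul hcont

lemma tendsto_sub_one_mul_lseries_residueClass (ha : IsUnit a) :
    Tendsto (fun z => (z - 1) * LSeries (fun n => (residueClass a n : ℂ)) z)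
      (𝓝[{z | 1 < z.re}] 1) (𝓝 (q.totient : ℂ)⁻¹) := by
  have h := (tendsto_sub_mul_LFunctionResidueClassAux a one_re.ge).add_const (q.totient : ℂ)⁻¹
  rw [zero_add] at h
  refine h.congr' ?_
  filter_upwards [self_mem_nhdsWithin] with z hz
  have hz' : z - 1 ≠ 0 := sub_ne_zero.2 fun h => by
    rw [h] at hz
    exact lt_irrefl _ hz
  rw [lseries_residueClass_eq_aux_add ha hz, mul_add, mul_div_cancel₀ _ hz']

lemma tendsto_sub_mul_lseries_residueClass (ha : IsUnit a) {s : ℂ} (hs : 1 ≤ s.re) (hs₁ : s ≠ 1) :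
    Tendsto (fun z => (z - s) * LSeries (fun n => (residueClass a n : ℂ)) z)
      (𝓝[{z | 1 < z.re}] s) (𝓝 0) := by
  have hpole : Tendsto (fun z : ℂ => (z - s) * ((q.totient : ℂ)⁻¹ / (z - 1)))
      (𝓝[{z | 1 < z.re}] s) (𝓝 0) := by
    have hne : s - 1 ≠ 0 := sub_ne_zero.2 hs₁
    have hcont : ContinuousAt (fun z : ℂ => (z - s) * ((q.totient : ℂ)⁻¹ / (z - 1))) s := by
      fun_prop (disch := exact hne)
    simpa only [sub_self, zero_mul] using tendsto_nhdsWithin_of_tendsto_nhds hcont.tendsto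
  have h := (tendsto_sub_mul_LFunctionResidueClassAux a hs).add hpole
  rw [zero_add] at h
  refine h.congr' ?_
  filter_upwards [self_mem_nhdsWithin] with z hz
  rw [lseries_residueClass_eq_aux_add ha hz, mul_add]

end ResidueClassSeries

section Nonvanishing

open Complex ArithmeticFunction.vonMangoldt
open scoped Topology

lemma isOpen_setOf_lt_re (σ : ℝ) : IsOpen {z : ℂ | σ < z.re} :=
  isOpen_lt continuous_const continuous_re

lemma lseriesSummable_heckeVonMangoldt {s : ℂ} (hs : 1 < s.re) :
    LSeriesSummable (fun n => (heckeVonMangoldt n : ℂ)) s :=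
  lseriesSummable_of_abs_le abs_heckeVonMangoldt_le (lseriesSummable_residueClass 1 hs)

lemma lseries_logMul_heckeSum {s : ℂ} (hs : 1 < s.re) :
    LSeries (LSeries.logMul heckeSum) s
      = LSeries (fun n => (heckeVonMangoldt n : ℂ)) s * LSeries heckeSum s := by
  rw [← LSeries_convolution' (lseriesSummable_heckeVonMangoldt hs) (lseriesSummable_heckeSum hs)]
  refine LSeries_congr (fun {n} hn => ?_) s
  rw [LSeries.convolution_def, LSeries.logMul, ← natCast_log,
    ← sum_divisors_heckeVonMangoldt_mul hn]
  exact (Nat.sum_divisorsAntidiagonal fun k l => (heckeVonMangoldt k : ℂ) * heckeSum l).symm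

lemma analyticOnNhd_latticeSeries : AnalyticOnNhd ℂ latticeSeries {s | 1 / 2 < s.re} :=
  differentiableOn_latticeSeries.analyticOnNhd (isOpen_setOf_lt_re _)

lemma analyticAt_latticeSeries {s : ℂ} (hs : 1 ≤ s.re) : AnalyticAt ℂ latticeSeries s :=
  analyticOnNhd_latticeSeries s (by rw [Set.mem_ofPred_eq]; linarith)

lemma deriv_latticeSeries {s : ℂ} (hs : 1 < s.re) :
    deriv latticeSeries s
      = -(LSeries (fun n => (heckeVonMangoldt n : ℂ)) s * latticeSeries s) := by
  have hconv : LSeries.abscissaOfAbsConv heckeSum < s.re :=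
    (LSeries.abscissaOfAbsConv_le_of_forall_lt_LSeriesSummable (x := 1) fun y hy =>
      lseriesSummable_heckeSum (by rwa [ofReal_re])).trans_lt (by exact_mod_cast hs)
  have heq : latticeSeries =ᶠ[𝓝 s] LSeries heckeSum := by
    filter_upwards [(isOpen_setOf_lt_re 1).mem_nhds hs] with z hz using latticeSeries_eq_lseries hz
  rw [heq.deriv_eq, LSeries_deriv hconv, lseries_logMul_heckeSum hs, latticeSeries_eq_lseries hs]

lemma analyticOrderAt_latticeSeries_ne_top {s : ℂ} (hs : 1 ≤ s.re) :
    analyticOrderAt latticeSeries s ≠ ⊤ := by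
  have hmem {z : ℂ} (hz : 1 ≤ z.re) : z ∈ {s : ℂ | 1 / 2 < s.re} := by
    rw [Set.mem_ofPred_eq]
    linarith
  refine analyticOnNhd_latticeSeries.analyticOrderAt_ne_top_of_isPreconnected
    (convex_halfSpace_re_gt (1 / 2)).isPreconnected (hmem one_re.ge) (hmem hs) ?_
  rw [(analyticAt_latticeSeries one_re.ge).analyticOrderAt_eq_zero.2 latticeSeries_one_ne_zero]
  exact ENat.zero_ne_top

lemma latticeSeries_ne_zero_iff {s : ℂ} (hs : 1 ≤ s.re) :
    latticeSeries s ≠ 0 ↔ analyticOrderNatAt latticeSeries s = 0 := by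
  rw [← (analyticAt_latticeSeries hs).analyticOrderAt_eq_zero,
    ← Nat.cast_analyticOrderNatAt (analyticOrderAt_latticeSeries_ne_top hs), Nat.cast_eq_zero]

lemma tendsto_sub_mul_lseries_heckeVonMangoldt {s : ℂ} (hs : 1 ≤ s.re) {l : Filter ℂ}
    (hl : l ≤ 𝓝[≠] s) (hre : ∀ᶠ z in l, 1 < z.re) :
    Tendsto (fun z => (z - s) * LSeries (fun n => (heckeVonMangoldt n : ℂ)) z) l
      (𝓝 (-analyticOrderNatAt latticeSeries s)) := by
  have hana := analyticAt_latticeSeries hs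
  have hord := analyticOrderAt_latticeSeries_ne_top hs
  have hne : ∀ᶠ z in 𝓝[≠] s, latticeSeries z ≠ 0 :=
    hana.eventually_eq_zero_or_eventually_ne_zero.resolve_left
      fun h => hord (analyticOrderAt_eq_top.2 h)
  refine ((tendsto_sub_mul_logDeriv hana hord).mono_left hl).neg.congr' ?_
  filter_upwards [hre, hl hne] with z hz hz₀
  rw [logDeriv_apply, deriv_latticeSeries hz, neg_div, mul_div_cancel_right₀ _ hz₀, mul_neg,
    neg_neg]

lemma latticeSeries_ne_zero_of_one_lt_re {s : ℂ} (hs : 1 < s.re) : latticeSeries s ≠ 0 := by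
  rw [latticeSeries_ne_zero_iff hs.le]
  have hcont : ContinuousAt (LSeries fun n => (heckeVonMangoldt n : ℂ)) s :=
    (LSeries_hasDerivAt ((LSeries.abscissaOfAbsConv_le_of_forall_lt_LSeriesSummable (x := 1)
      fun y hy => lseriesSummable_heckeVonMangoldt (by rwa [ofReal_re])).trans_lt
        (by exact_mod_cast hs))).continuousAt
  have hsub : Tendsto (fun z => z - s) (𝓝[≠] s) (𝓝 0) :=
    tendsto_sub_nhds_zero_iff.2 (tendsto_id'.2 nhdsWithin_le_nhds)
  have hzero := hsub.mul (hcont.tendsto.mono_left nhdsWithin_le_nhds)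
  rw [zero_mul] at hzero
  have hlim := tendsto_sub_mul_lseries_heckeVonMangoldt hs.le le_rfl
    (nhdsWithin_le_nhds ((isOpen_setOf_lt_re 1).mem_nhds hs))
  exact_mod_cast neg_eq_zero.1 (tendsto_nhds_unique hlim hzero)

lemma tendsto_ofReal_add_mul_I (t : ℝ) :
    Tendsto (fun σ : ℝ => (σ + t * I : ℂ)) (𝓝[>] 1) (𝓝[{z | 1 < z.re}] (1 + t * I)) := by
  refine tendsto_nhdsWithin_iff.2 ⟨?_, ?_⟩
  · exact tendsto_nhdsWithin_of_tendsto_nhds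
      (Continuous.tendsto' (by fun_prop) _ _ (by rw [ofReal_one]))
  · filter_upwards [self_mem_nhdsWithin] with σ hσ
    simpa using hσ

lemma tendsto_sub_one_mul_re {F : ℂ → ℂ} {t : ℝ} {L : ℂ}
    (h : Tendsto (fun z => (z - (1 + t * I)) * F z) (𝓝[{z | 1 < z.re}] (1 + t * I)) (𝓝 L)) :
    Tendsto (fun σ : ℝ => (σ - 1) * (F (σ + t * I)).re) (𝓝[>] 1) (𝓝 L.re) := by
  refine ((continuous_re.tendsto L).comp (h.comp (tendsto_ofReal_add_mul_I t))).congr fun σ => ?_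
  rw [Function.comp_apply, Function.comp_apply, add_sub_add_right_eq_sub, ← ofReal_one,
    ← ofReal_sub, re_ofReal_mul]

lemma latticeSeries_one_add_mul_I_ne_zero {t : ℝ} (ht : t ≠ 0) :
    latticeSeries (1 + t * I) ≠ 0 := by
  have hre (t : ℝ) : (1 + t * I : ℂ).re = 1 := by simp
  rw [latticeSeries_ne_zero_iff (hre t).ge]
  set m := analyticOrderNatAt latticeSeries (1 + t * I)
  have hne : (1 + (2 * t : ℝ) * I : ℂ) ≠ 1 := by simp [ht]
  have hunit := isUnit_one (M := ZMod 4)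
  have hpole : Tendsto (fun σ : ℝ => (σ - 1) *
      (LSeries (fun n => (residueClass (1 : ZMod 4) n : ℂ)) σ).re) (𝓝[>] 1) (𝓝 (1 / 2)) := by
    have h := tendsto_sub_one_mul_lseries_residueClass hunit
    rw [show Nat.totient 4 = 2 from rfl] at h
    simpa using tendsto_sub_one_mul_re (t := 0) (L := (1 / 2 : ℝ)) (by simpa using h)
  have hzero := tendsto_sub_one_mul_re
    (tendsto_sub_mul_lseries_residueClass hunit (hre (2 * t)).ge hne)
  have hhecke := tendsto_sub_one_mul_re (tendsto_sub_mul_lseries_heckeVonMangoldt (hre t).ge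
    (nhdsWithin_mono _ fun z (hz : 1 < z.re) h => hz.ne' (h ▸ hre t)) self_mem_nhdsWithin)
  have hnonneg : 0 ≤ 3 * (1 / 2 : ℝ) + 2 * (-m : ℂ).re + (0 : ℂ).re := by
    refine ge_of_tendsto (((hpole.const_mul 3).add (hhecke.const_mul 2)).add hzero) ?_
    filter_upwards [self_mem_nhdsWithin] with σ hσ
    have h := mul_nonneg (sub_nonneg.2 (le_of_lt hσ)) (re_lseries_combination_nonneg
      abs_heckeVonMangoldt_le (lseriesSummable_residueClass (1 : ZMod 4) (s := σ) hσ) t)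
    linarith
  rw [neg_re, natCast_re, zero_re] at hnonneg
  by_contra hm
  have : (1 : ℝ) ≤ m := by exact_mod_cast Nat.one_le_iff_ne_zero.2 hm
  linarith

theorem latticeSeries_ne_zero {s : ℂ} (hs : 1 ≤ s.re) : latticeSeries s ≠ 0 := by
  rcases hs.lt_or_eq with hs | hs
  · exact latticeSeries_ne_zero_of_one_lt_re hs
  rcases eq_or_ne s.im 0 with him | him
  · rw [show s = 1 from Complex.ext hs.symm him]
    exact latticeSeries_one_ne_zero
  · rw [← re_add_im s, ← hs, ofReal_one]
    exact latticeSeries_one_add_mul_I_ne_zero him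

end Nonvanishing

section PrimeSums

open Finset ArithmeticFunction
open scoped Topology

lemma tendsto_psi_sub_theta_div :
    Tendsto (fun x => (Chebyshev.psi x - Chebyshev.theta x) / x) atTop (𝓝 0) := by
  obtain ⟨C, hC⟩ := Chebyshev.psi_sub_theta_le_mul_sqrt
  have hlim : Tendsto (fun x => C * (√x)⁻¹) atTop (𝓝 0) := by
    simpa only [mul_zero, Pi.inv_apply] using Real.tendsto_sqrt_atTop.inv_tendsto_atTop.const_mul C
  refine squeeze_zero' ?_ ?_ hlim
  · filter_upwards [eventually_ge_atTop 0] with x hx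
    exact div_nonneg (sub_nonneg.2 (Chebyshev.theta_le_psi x)) hx
  · filter_upwards [eventually_gt_atTop 0] with x hx
    rw [← Real.sqrt_div_self, ← mul_div_assoc]
    exact div_le_div_of_nonneg_right (hC x) hx.le

lemma tendsto_primeCounting_mul_log_sub_theta_div :
    Tendsto (fun N : ℕ => (Nat.primeCounting N * Real.log N - Chebyshev.theta N) / N) atTop
      (𝓝 0) := by
  have hlog : Tendsto (fun N : ℕ => (Real.log N)⁻¹) atTop (𝓝 0) :=
    (Real.tendsto_log_atTop.comp tendsto_natCast_atTop_atTop).inv_tendsto_atTop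
  have hO := (Chebyshev.primeCounting_sub_theta_div_log_isBigO.comp_tendsto
    (tendsto_natCast_atTop_atTop (R := ℝ))).mul
      (Asymptotics.isBigO_refl (fun N : ℕ => Real.log N / N) atTop)
  refine (hO.congr' ?_ ?_).trans_tendsto hlog
  all_goals
    filter_upwards [eventually_gt_atTop 1] with N hN
    have hlog : Real.log N ≠ 0 := (Real.log_pos (by exact_mod_cast hN)).ne'
    have hN : (N : ℝ) ≠ 0 := by positivity
    simp only [Function.comp_apply, Nat.floor_natCast]
    field_simp

variable {f : ℕ → ℝ} {K : ℝ}

lemma tendsto_summatory_sub_sum_primesLE_div (hf : ∀ n, 0 ≤ f n) (hK : ∀ n, f n ≤ K * Λ n) :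
    Tendsto (fun N : ℕ => (summatory f N - ∑ p ∈ N.primesLE, f p) / N) atTop (𝓝 0) := by
  have heq (N : ℕ) : summatory f N - ∑ p ∈ N.primesLE, f p
      = ∑ n ∈ Ioc 0 N with ¬n.Prime, f n := by
    rw [summatory, Nat.floor_natCast, Nat.primesLE_eq_filter_Ioc_zero, sub_eq_iff_eq_add',
      sum_filter_add_sum_filter_not]
    rfl
  have hlim := (tendsto_psi_sub_theta_div.comp tendsto_natCast_atTop_atTop).const_mul K
  rw [mul_zero] at hlim
  refine squeeze_zero (fun N => ?_) (fun N => ?_) hlim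
  · rw [heq]
    exact div_nonneg (sum_nonneg fun n _ => hf n) N.cast_nonneg
  · rw [heq, Function.comp_apply, Chebyshev.psi_sub_theta_eq_sum_not_prime, Nat.floor_natCast,
      ← mul_div_assoc, mul_sum]
    exact div_le_div_of_nonneg_right (sum_le_sum fun n _ => hK n) N.cast_nonneg

lemma tendsto_sum_div_log_mul_log_sub_sum_div (hf : ∀ n, 0 ≤ f n) (hK : ∀ n, f n ≤ K * Λ n) :
    Tendsto (fun N : ℕ => ((∑ p ∈ N.primesLE, f p / Real.log p) * Real.log N
      - ∑ p ∈ N.primesLE, f p) / N) atTop (𝓝 0) := by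
  have hlogp {p : ℕ} (hp : p.Prime) : 0 < Real.log p := Real.log_pos (by exact_mod_cast hp.one_lt)
  have heq (N : ℕ) : (∑ p ∈ N.primesLE, f p / Real.log p) * Real.log N - ∑ p ∈ N.primesLE, f p
      = ∑ p ∈ N.primesLE, f p / Real.log p * (Real.log N - Real.log p) := by
    rw [sum_mul, ← sum_sub_distrib]
    refine sum_congr rfl fun p hp => ?_
    rw [mul_sub, div_mul_cancel₀ _ (hlogp (Nat.prime_of_mem_primesLE hp)).ne']
  have hlog {N p : ℕ} (hp : p ∈ N.primesLE) : 0 ≤ Real.log N - Real.log p :=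
    sub_nonneg.2 (Real.log_le_log (by exact_mod_cast (Nat.prime_of_mem_primesLE hp).pos)
      (by exact_mod_cast Nat.le_of_mem_primesLE hp))
  have hlim := tendsto_primeCounting_mul_log_sub_theta_div.const_mul K
  rw [mul_zero] at hlim
  refine squeeze_zero (fun N => ?_) (fun N => ?_) hlim
  · rw [heq]
    exact div_nonneg (sum_nonneg fun p hp => mul_nonneg
      (div_nonneg (hf p) (hlogp (Nat.prime_of_mem_primesLE hp)).le) (hlog hp)) N.cast_nonneg
  · rw [heq, ← mul_div_assoc, Chebyshev.theta_eq_sum_primesLE_log,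
      ← Nat.primesLE_card_eq_primeCounting, ← nsmul_eq_mul, ← sum_const, ← sum_sub_distrib, mul_sum]
    refine div_le_div_of_nonneg_right (sum_le_sum fun p hp => ?_) N.cast_nonneg
    have hp' := Nat.prime_of_mem_primesLE hp
    refine mul_le_mul_of_nonneg_right ((div_le_iff₀ (hlogp hp')).2 ?_) (hlog hp)
    rw [← vonMangoldt_apply_prime hp']
    exact hK p

/-- Wiener–Ikehara for the sum over primes: the prime powers contribute `O(√N)`, and partial
summation replaces the weight `log p` by `log N`. -/
theorem tendsto_sum_primesLE_mul_log_div (hf : ∀ n, 0 ≤ f n) (hK : ∀ n, f n ≤ K * Λ n) (A : ℝ)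
    {G : ℂ → ℂ} (hG : ContinuousOn G {s | 1 ≤ s.re})
    (hL : ∀ s : ℂ, 1 < s.re → LSeries (fun n => (f n : ℂ)) s = G s + A / (s - 1)) :
    Tendsto (fun N : ℕ => (∑ p ∈ N.primesLE, f p / Real.log p) * Real.log N / N) atTop
      (𝓝 A) := by
  have hK₀ : 0 ≤ K := by
    have h := (hf 2).trans (hK 2)
    rw [vonMangoldt_apply_prime Nat.prime_two] at h
    exact nonneg_of_mul_nonneg_left h (Real.log_pos (by norm_num))
  have hlinear (x : ℝ) (hx : 1 ≤ x) : summatory f x ≤ K * (Real.log 4 + 4) * x := by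
    calc summatory f x ≤ ∑ n ∈ Icc 1 ⌊x⌋₊, K * Λ n := sum_le_sum fun n _ => hK n
      _ = K * Chebyshev.psi x := (mul_sum _ _ _).symm
      _ ≤ K * ((Real.log 4 + 4) * x) :=
        mul_le_mul_of_nonneg_left (Chebyshev.psi_le_const_mul_self (by linarith)) hK₀
      _ = K * (Real.log 4 + 4) * x := (mul_assoc _ _ _).symm
  have hmain := (tendsto_summatory_div_of_LSeries hf hlinear A hG hL).comp
    tendsto_natCast_atTop_atTop
  have h := (hmain.sub (tendsto_summatory_sub_sum_primesLE_div hf hK)).add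
    (tendsto_sum_div_log_mul_log_sub_sum_div hf hK)
  rw [sub_zero, add_zero] at h
  refine h.congr fun N => ?_
  rw [Function.comp_apply, ← sub_div, ← add_div, sub_sub_cancel, add_sub_cancel]

end PrimeSums

section SecondMoment

open ArithmeticFunction ArithmeticFunction.vonMangoldt Topology

lemma log_prime_ne_zero {p : ℕ} (hp : p.Prime) : Real.log p ≠ 0 :=
  (Real.log_pos (by exact_mod_cast hp.one_lt)).ne'

theorem tendsto_card_primesLE_mul_log_div :
    Tendsto (fun N : ℕ => N.primesLE.card * Real.log N / N) atTop (𝓝 1) := by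
  have hclass (n : ℕ) : residueClass (1 : ZMod 1) n = vonMangoldt n :=
    Set.indicator_of_mem (s := {n : ℕ | (n : ZMod 1) = 1}) (Subsingleton.elim _ _) _
  have h := tendsto_sum_primesLE_mul_log_div (f := residueClass (1 : ZMod 1)) (K := 1)
    (residueClass_nonneg 1) (fun n => by rw [hclass, one_mul]) 1
    (continuousOn_LFunctionResidueClassAux (1 : ZMod 1)) fun s hs => by
      rw [lseries_residueClass_eq_aux_add isUnit_one hs, Nat.totient_one]
      norm_num
  refine h.congr fun N => ?_
  rw [Finset.card_eq_sum_ones, Nat.cast_sum]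
  congr 2
  refine Finset.sum_congr rfl fun p hp => ?_
  have hp := Nat.prime_of_mem_primesLE hp
  rw [hclass, vonMangoldt_apply_prime hp, div_self (log_prime_ne_zero hp), Nat.cast_one]

lemma residueClass_one_prime {p : ℕ} (hp : p.Prime) :
    residueClass (1 : ZMod 4) p = if p % 4 = 1 then Real.log p else 0 := by
  have hmod : (p : ZMod 4) = 1 ↔ p % 4 = 1 := by
    simpa using ZMod.natCast_eq_natCast_iff' p 1 4
  simp only [residueClass, Set.indicator_apply, Set.mem_ofPred_eq, hmod,
    vonMangoldt_apply_prime hp]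

lemma two_mul_residueClass_add_heckeVonMangoldt_prime {p : ℕ} (hp : p.Prime) :
    (2 * residueClass (1 : ZMod 4) p + heckeVonMangoldt p) / Real.log p
      = if p = 2 then 0 else frobeniusTrace p ^ 2 / p := by
  have := Fact.mk hp
  have hlog := log_prime_ne_zero hp
  rw [residueClass_one_prime hp, heckeVonMangoldt, logDerivCoeff_prime hp, eulerTrace]
  by_cases h₁ : p % 4 = 1
  · rw [if_pos h₁, if_pos h₁, if_neg (by omega)]
    field_simp
    ring
  · rw [if_neg h₁, if_neg h₁, mul_zero, mul_zero, add_zero, zero_div]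
    by_cases h₂ : p = 2
    · rw [if_pos h₂]
    · rw [if_neg h₂, frobeniusTrace_eq_zero (by have := hp.eq_two_or_odd; omega), sq, zero_mul,
        zero_div]

lemma continuousOn_logDeriv_latticeSeries : ContinuousOn (logDeriv latticeSeries) {s | 1 ≤ s.re} :=
  fun _ hs => ((analyticAt_latticeSeries hs).deriv.continuousAt.div
    (analyticAt_latticeSeries hs).continuousAt (latticeSeries_ne_zero hs)).continuousWithinAt

lemma lseries_two_mul_residueClass_add_heckeVonMangoldt {s : ℂ} (hs : 1 < s.re) :
    LSeries (fun n => ((2 * residueClass (1 : ZMod 4) n + heckeVonMangoldt n : ℝ) : ℂ)) s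
      = 2 * LFunctionResidueClassAux (1 : ZMod 4) s - logDeriv latticeSeries s
        + (1 : ℝ) / (s - 1) := by
  have hadd := LSeries_add ((lseriesSummable_residueClass (1 : ZMod 4) hs).smul 2)
    (lseriesSummable_heckeVonMangoldt hs)
  rw [LSeries_smul, lseries_residueClass_eq_aux_add isUnit_one hs,
    show Nat.totient 4 = 2 from rfl] at hadd
  have hcongr : (fun n => ((2 * residueClass (1 : ZMod 4) n + heckeVonMangoldt n : ℝ) : ℂ))
      = (2 : ℂ) • (fun n => (residueClass (1 : ZMod 4) n : ℂ))
        + fun n => (heckeVonMangoldt n : ℂ) := by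
    ext n
    simp
  rw [hcongr, hadd, logDeriv_apply, deriv_latticeSeries hs, neg_div,
    mul_div_cancel_right₀ _ (latticeSeries_ne_zero hs.le)]
  push_cast
  ring

theorem tendsto_sum_frobeniusTrace_sq_mul_log_div :
    Tendsto (fun N : ℕ => (∑ p ∈ N.primesLE, if p = 2 then 0 else frobeniusTrace p ^ 2 / p)
      * Real.log N / N) atTop (𝓝 1) := by
  have habs (n : ℕ) := abs_le.1 (abs_heckeVonMangoldt_le n)
  have h := tendsto_sum_primesLE_mul_log_div
    (f := fun n => 2 * residueClass (1 : ZMod 4) n + heckeVonMangoldt n) (K := 4)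
    (fun n => by linarith [(habs n).1])
    (fun n => by linarith [(habs n).2, residueClass_le (1 : ZMod 4) n]) 1
    ((continuousOn_const.mul (continuousOn_LFunctionResidueClassAux 1)).sub
      continuousOn_logDeriv_latticeSeries)
    fun s hs => lseries_two_mul_residueClass_add_heckeVonMangoldt hs
  refine h.congr fun N => ?_
  congr 2
  exact Finset.sum_congr rfl fun p hp =>
    two_mul_residueClass_add_heckeVonMangoldt_prime (Nat.prime_of_mem_primesLE hp)

end SecondMoment

end CMTrace

/-- Let `a_p = p − #{(x,y) ∈ F_p² : y² = x³ + x}` be the trace of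
Frobenius of the CM elliptic curve `y² = x³ + x`, and let `π(N)` be the number of
primes at most `N`.  Then
`lim_{N → ∞} (1/π(N)) Σ_{odd primes p ≤ N} a_p²/p = 1`. -/
theorem second_moment_of_CM_traces :
    Tendsto
      (fun N : ℕ =>
        (1 / ((Finset.range (N + 1) |>.filter Nat.Prime).card : ℝ)) *
          ∑ p ∈ Finset.range (N + 1) |>.filter (fun p => p.Prime ∧ p ≠ 2),
            ((p : ℝ) - (Nat.card {xy : ZMod p × ZMod p //
              xy.2 ^ 2 = xy.1 ^ 3 + xy.1} : ℝ)) ^ 2 / p)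
      atTop (nhds 1) := by
  have h := CMTrace.tendsto_sum_frobeniusTrace_sq_mul_log_div.div
    CMTrace.tendsto_card_primesLE_mul_log_div one_ne_zero
  rw [div_one] at h
  refine h.congr' ?_
  filter_upwards [eventually_gt_atTop 1] with N hN
  have hlog : Real.log N ≠ 0 := (Real.log_pos (by exact_mod_cast hN)).ne'
  have hN₀ : (N : ℝ) ≠ 0 := by positivity
  have hsum : ∑ p ∈ N.primesLE, (if p = 2 then 0 else CMTrace.frobeniusTrace p ^ 2 / p)
      = ∑ p ∈ Finset.range (N + 1) with p.Prime ∧ p ≠ 2, CMTrace.frobeniusTrace p ^ 2 / p := by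
    rw [Nat.primesLE_eq_filter_range, ← Finset.filter_filter, Finset.sum_filter (· ≠ 2)]
    simp only [ne_eq, ite_not]
  rw [Pi.div_apply, div_div_div_cancel_right₀ hN₀, mul_div_mul_right _ _ hlog, hsum, one_div,
    div_eq_inv_mul]
  rfl
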